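/- arXiv:1001.2175 — 2 statements merged into one kernel-verified Lean document; each statement's English description precedes it below -/
import Mathlib

section
/- Let K be a commutative semiring with 0 ≠ 1 that is locally finite, or let K be a commutative ring, and let S : NW(Δ) → K be a regular nested word series whose image S(NW(Δ)) ⊆ K is finite. Then for every subset A ⊆ K the language S⁻¹(A) = {nw ∈ NW(Δ) : (S,nw) ∈ A} is a regular nested word language. -/
/-! ### Nested words and weighted nested word automata -/

/-- A nesting relation of width `n` (positions `1,…,n`). -/
def IsNestingRel (n : ℕ) (ν : ℕ → ℕ → Prop) : Prop :=
  (∀ i j, ν i j → 1 ≤ i ∧ i < j ∧ j ≤ n) ∧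
  (∀ i j j', ν i j → ν i j' → j = j') ∧
  (∀ i i' j, ν i j → ν i' j → i = i') ∧
  (∀ i j i' j', ν i j → ν i' j' → i < i' → j < i' ∨ j' < j)

/-- A nested word over `Δ`: a nonempty word together with a nesting relation. -/
structure NestedWord (Δ : Type) : Type where
  word : List Δ
  ne : word ≠ []
  rel : ℕ → ℕ → Prop
  isNest : IsNestingRel word.length rel

namespace NestedWord

variable {Δ : Type} (nw : NestedWord Δ)

/-- The length of the nested word. -/
def len : ℕ := nw.word.length

/-- The letter at (1-based) position `j`. -/
def letter (j : ℕ) : Δ := nw.word.getD (j - 1) (nw.word.head nw.ne)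

def IsCall (j : ℕ) : Prop := ∃ i, nw.rel j i
def IsReturn (j : ℕ) : Prop := ∃ i, nw.rel i j
def IsInternal (j : ℕ) : Prop :=
  1 ≤ j ∧ j ≤ nw.len ∧ ¬ nw.IsCall j ∧ ¬ nw.IsReturn j

/-- The nesting depth of position `k`: the number of arches open at `k`. -/
noncomputable def depth (k : ℕ) : ℕ :=
  Set.ncard {p : ℕ × ℕ | nw.rel p.1 p.2 ∧ p.1 ≤ k ∧ k ≤ p.2}

end NestedWord

/-- Clamp a function on `Fin (n+1)` to a function on `ℕ`. -/
def clampFun {Q : Type} {n : ℕ} (r : Fin (n + 1) → Q) : ℕ → Q :=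
  fun k => r ⟨min k n, Nat.lt_succ_of_le (min_le_right _ _)⟩

/-- A weighted nested word automaton over the commutative semiring `K`. -/
structure WNWA (K Δ : Type) [CommSemiring K] : Type 1 where
  Q : Type
  [fintQ : Fintype Q]
  ι : Q → K
  δcall : Q → Δ → Q → K
  δint : Q → Δ → Q → K
  δret : Q → Q → Δ → Q → K
  κ : Q → K

attribute [instance] WNWA.fintQ

namespace WNWA

variable {K Δ : Type} [CommSemiring K]

open Classical in
/-- The weight contributed by position `j` in a run `ρ`. -/
noncomputable def posWeight (A : WNWA K Δ) (nw : NestedWord Δ) (ρ : ℕ → A.Q) (j : ℕ) : K :=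
  if nw.IsCall j then A.δcall (ρ (j - 1)) (nw.letter j) (ρ j)
  else if h : nw.IsReturn j then
    A.δret (ρ (j - 1)) (ρ (h.choose - 1)) (nw.letter j) (ρ j)
  else A.δint (ρ (j - 1)) (nw.letter j) (ρ j)

/-- The weight of a run. -/
noncomputable def runWeight (A : WNWA K Δ) (nw : NestedWord Δ) (ρ : ℕ → A.Q) : K :=
  ∏ j ∈ Finset.Icc 1 nw.len, A.posWeight nw ρ j

/-- The behavior of a weighted nested word automaton. -/
noncomputable def behavior (A : WNWA K Δ) (nw : NestedWord Δ) : K :=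
  ∑ r : Fin (nw.len + 1) → A.Q,
    A.ι (r 0) * A.runWeight nw (clampFun r) * A.κ (r (Fin.last _))

end WNWA

/-- A nested word series is regular if it is the behavior of some WNWA. -/
def NWRegular {K Δ : Type} [CommSemiring K] (S : NestedWord Δ → K) : Prop :=
  ∃ A : WNWA K Δ, ∀ nw, A.behavior nw = S nw
/-! ### Unweighted nested word automata and regular nested word languages -/

/-- An (unweighted) nested word automaton. -/
structure NWA (Δ : Type) : Type 1 where
  Q : Type
  [fintQ : Fintype Q]
  ι : Q → Prop
  κ : Q → Prop
  δcall : Q → Δ → Q → Prop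
  δint : Q → Δ → Q → Prop
  δret : Q → Q → Δ → Q → Prop

attribute [instance] NWA.fintQ

/-- Acceptance of a nested word by a nested word automaton. -/
def NWA.accepts {Δ : Type} (A : NWA Δ) (nw : NestedWord Δ) : Prop :=
  ∃ r : Fin (nw.len + 1) → A.Q,
    A.ι (r 0) ∧ A.κ (r (Fin.last _)) ∧
    ∀ j, 1 ≤ j → j ≤ nw.len →
      (nw.IsCall j →
        A.δcall (clampFun r (j - 1)) (nw.letter j) (clampFun r j)) ∧
      (∀ i, nw.rel i j →
        A.δret (clampFun r (j - 1)) (clampFun r (i - 1)) (nw.letter j) (clampFun r j)) ∧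
      (nw.IsInternal j →
        A.δint (clampFun r (j - 1)) (nw.letter j) (clampFun r j))

/-- A regular language of nested words. -/
def NWLangRegular {Δ : Type} (L : Set (NestedWord Δ)) : Prop :=
  ∃ A : NWA Δ, ∀ nw, A.accepts nw ↔ nw ∈ L
/-- `K` is locally finite: every finitely generated subsemiring is finite. -/
def LocallyFiniteSemiring (K : Type) [CommSemiring K] : Prop :=
  ∀ s : Finset K, ((Subsemiring.closure (s : Set K) : Subsemiring K) : Set K).Finite

/-!
Cut along its nesting relation, a nested word becomes a term over the empty word, with internal
letters and arches as operations, and the transfer matrix of an automaton is computed along this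
term: an internal letter multiplies by a matrix, and an arch applies a linear map to the transfer
matrix of its inside. Hence plugging a well-matched word into a context is a linear functional of
its transfer matrix. All weights lie in a finitely generated subsemiring, which may be chosen so
that the dual of the matrix module is Noetherian over it; so finitely many contexts decide whether
two words agree in all contexts, and as each of them takes finitely many values, the syntactic
congruence has finite index. A deterministic automaton can therefore track the syntactic class of
the word read since the innermost open call, together with the letter of that call.
-/

section MarginalSum

open Finset Function

variable {ι Q M R : Type*} [DecidableEq ι] [Fintype Q]

/-- The sum of `F` over all ways of changing the coordinates in `s` of its argument: the discrete
analogue of `MeasureTheory.lmarginal`. It serves to sum over the states of a run at prescribed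
positions. -/
def marginalSum [AddCommMonoid M] (s : Finset ι) (F : (ι → Q) → M) (ρ : ι → Q) : M :=
  ∑ x : s → Q, F (updateFinset ρ s x)

section AddCommMonoid

variable [AddCommMonoid M]

@[simp]
theorem marginalSum_empty (F : (ι → Q) → M) : marginalSum ∅ F = F := by
  ext ρ
  simp [marginalSum]

theorem marginalSum_singleton (i : ι) (F : (ι → Q) → M) (ρ : ι → Q) :
    marginalSum {i} F ρ = ∑ q, F (update ρ i q) := by
  rw [marginalSum, ← (Equiv.funUnique ({i} : Finset ι) Q).sum_comp]
  exact sum_congr rfl fun x _ ↦ congrArg F updateFinset_singleton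

theorem marginalSum_union {s t : Finset ι} (hst : Disjoint s t) (F : (ι → Q) → M) :
    marginalSum (s ∪ t) F = marginalSum s (marginalSum t F) := by
  ext ρ
  simp only [marginalSum, updateFinset_updateFinset hst]
  rw [← (Equiv.piFinsetUnion (fun _ ↦ Q) hst).sum_comp, Fintype.sum_prod_type]

theorem marginalSum_congr {s : Finset ι} {F G : (ι → Q) → M} {ρ : ι → Q}
    (h : ∀ ρ' : ι → Q, (∀ i ∉ s, ρ' i = ρ i) → F ρ' = G ρ') :
    marginalSum s F ρ = marginalSum s G ρ :=
  sum_congr rfl fun _ _ ↦ h _ fun _ hi ↦ dif_neg hi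

theorem marginalSum_Ioc_append {o m e : ℕ} (hom : o ≤ m) (hme : m ≤ e) (F : (ℕ → Q) → M) :
    marginalSum (Ioc o e) F = marginalSum (Ioc o m) (marginalSum (Ioc m e) F) := by
  rw [← marginalSum_union (Ioc_disjoint_Ioc_of_le le_rfl), Ioc_union_Ioc_eq_Ioc hom hme]

theorem marginalSum_Ioc_succ (o : ℕ) (F : (ℕ → Q) → M) (ρ : ℕ → Q) :
    marginalSum (Ioc o (o + 1)) F ρ = ∑ q, F (update ρ (o + 1) q) := by
  rw [Nat.Ioc_succ_singleton, marginalSum_singleton]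

end AddCommMonoid

theorem marginalSum_mul_left [NonUnitalNonAssocSemiring R] {s : Finset ι} {G : (ι → Q) → R}
    (hG : DependsOn G (s : Set ι)ᶜ) (F : (ι → Q) → R) (ρ : ι → Q) :
    marginalSum s (fun ρ' ↦ G ρ' * F ρ') ρ = G ρ * marginalSum s F ρ := by
  rw [marginalSum, marginalSum, mul_sum]
  exact sum_congr rfl fun x _ ↦ congrArg (· * _) (hG fun i hi ↦ dif_neg hi)

theorem sum_clampFun {Q : Type} [Fintype Q] [AddCommMonoid M] {n : ℕ} {F : (ℕ → Q) → M}
    (hF : DependsOn F (Set.Iic n)) (ρ : ℕ → Q) :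
    ∑ r : Fin (n + 1) → Q, F (clampFun r) = marginalSum (range (n + 1)) F ρ := by
  let e : range (n + 1) ≃ Fin (n + 1) :=
    (Equiv.subtypeEquivRight fun _ ↦ mem_range).trans Fin.equivSubtype.symm
  rw [marginalSum, ← (e.arrowCongr (Equiv.refl Q)).sum_comp]
  refine sum_congr rfl fun x _ ↦ hF fun k (hk : k ≤ n) ↦ ?_
  have hk' : k ∈ range (n + 1) := mem_range.2 (Nat.lt_succ_of_le hk)
  simp only [clampFun, updateFinset, hk', dif_pos, min_eq_left hk]
  rfl

end MarginalSum

theorem isNestingRel_iff {n : ℕ} {ν : ℕ → ℕ → Prop} :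
    IsNestingRel n ν ↔ (∀ i j, ν i j → 1 ≤ i ∧ i < j ∧ j ≤ n) ∧
      ∀ i j i' j', ν i j → ν i' j' → (i = i' ∧ j = j') ∨ j < i' ∨ j' < i ∨
        (i < i' ∧ j' < j) ∨ (i' < i ∧ j < j') := by
  constructor
  · rintro ⟨bounds, call_unique, -, nested⟩
    refine ⟨bounds, fun i j i' j' h h' ↦ ?_⟩
    rcases lt_trichotomy i i' with hlt | rfl | hgt
    · have := nested _ _ _ _ h h' hlt
      omega
    · exact .inl ⟨rfl, call_unique _ _ _ h h'⟩
    · have := nested _ _ _ _ h' h hgt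
      omega
  · rintro ⟨bounds, laminar⟩
    refine ⟨bounds, fun i j j' h h' ↦ ?_, fun i i' j h h' ↦ ?_, fun i j i' j' h h' hlt ↦ ?_⟩
    all_goals
      have := bounds _ _ h
      have := bounds _ _ h'
      have := laminar _ _ _ _ h h'
      omega

/-- Well-matched, possibly empty, nested words over `Δ` as a free algebra: a nonempty one is a
shorter one followed by an internal letter or by an arch `a v b` around a well-matched `v`. -/
inductive MatchedWord (Δ : Type) : Type
  | nil : MatchedWord Δ
  | int (w : MatchedWord Δ) (a : Δ) : MatchedWord Δ
  | arch (w : MatchedWord Δ) (a : Δ) (v : MatchedWord Δ) (b : Δ) : MatchedWord Δ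

namespace MatchedWord

variable {Δ : Type}

/-- The underlying word of a well-matched word. -/
def word : MatchedWord Δ → List Δ
  | nil => []
  | int w a => w.word ++ [a]
  | arch w a v b => w.word ++ a :: (v.word ++ [b])

/-- The nesting relation of a well-matched word whose first letter has position `o + 1`. -/
def rel : MatchedWord Δ → ℕ → ℕ → ℕ → Prop
  | nil, _, _, _ => False
  | int w _, o, i, j => w.rel o i j
  | arch w _ v _, o, i, j => w.rel o i j ∨
      (i = o + w.word.length + 1 ∧ j = o + w.word.length + v.word.length + 2) ∨
      v.rel (o + w.word.length + 1) i j

theorem rel_bounds {w : MatchedWord Δ} {o i j : ℕ} (h : w.rel o i j) :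
    o < i ∧ i < j ∧ j ≤ o + w.word.length := by
  induction w generalizing o with
  | nil => exact h.elim
  | int w a ih =>
    have := ih h
    simp only [word, List.length_append]
    omega
  | arch w a v b ihw ihv =>
    simp only [word, List.length_append, List.length_cons, List.length_nil]
    rcases h with h | h | h
    · have := ihw h
      omega
    · omega
    · have := ihv h
      omega

theorem rel_laminar {w : MatchedWord Δ} {o i j i' j' : ℕ} (h : w.rel o i j)
    (h' : w.rel o i' j') : (i = i' ∧ j = j') ∨ j < i' ∨ j' < i ∨
      (i < i' ∧ j' < j) ∨ (i' < i ∧ j < j') := by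
  induction w generalizing o with
  | nil => exact h.elim
  | int w a ih => exact ih h h'
  | arch w a v b ihw ihv =>
    have boundsw {i j} := rel_bounds (w := w) (o := o) (i := i) (j := j)
    have boundsv {i j} := rel_bounds (w := v) (o := o + w.word.length + 1) (i := i) (j := j)
    rcases h with h | h | h <;> rcases h' with h' | h' | h' <;> grind

theorem rel_arch_iff_left {w v : MatchedWord Δ} {a b : Δ} {o i j : ℕ}
    (h : i ≤ o + w.word.length ∨ j ≤ o + w.word.length) :
    (arch w a v b).rel o i j ↔ w.rel o i j := by
  refine ⟨?_, .inl⟩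
  rintro (hw | hab | hv)
  · exact hw
  · omega
  · have := rel_bounds hv
    omega

theorem rel_arch_iff_inside {w v : MatchedWord Δ} {a b : Δ} {o i j : ℕ}
    (h : i ∈ Set.Ioc (o + w.word.length + 1) (o + w.word.length + 1 + v.word.length) ∨
      j ∈ Set.Ioc (o + w.word.length + 1) (o + w.word.length + 1 + v.word.length)) :
    (arch w a v b).rel o i j ↔ v.rel (o + w.word.length + 1) i j := by
  simp only [Set.mem_Ioc] at h
  refine ⟨?_, fun hv ↦ .inr (.inr hv)⟩
  rintro (hw | hab | hv)
  · have := rel_bounds hw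
    omega
  · omega
  · exact hv

end MatchedWord

namespace NestedWord

variable {Δ : Type} {nw : NestedWord Δ}

theorem rel_bounds {i j : ℕ} (h : nw.rel i j) : 1 ≤ i ∧ i < j ∧ j ≤ nw.len :=
  nw.isNest.1 i j h

theorem rel_laminar {i j i' j' : ℕ} (h : nw.rel i j) (h' : nw.rel i' j') :
    (i = i' ∧ j = j') ∨ j < i' ∨ j' < i ∨ (i < i' ∧ j' < j) ∨ (i' < i ∧ j < j') :=
  (isNestingRel_iff.1 nw.isNest).2 i j i' j' h h'

theorem rel_left_unique {i i' j : ℕ} (h : nw.rel i j) (h' : nw.rel i' j) : i = i' :=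
  nw.isNest.2.2.1 i i' j h h'

theorem not_isCall_of_rel {i j : ℕ} (h : nw.rel i j) : ¬ nw.IsCall j := by
  rintro ⟨k, hk⟩
  have := rel_bounds h
  have := rel_bounds hk
  have := rel_laminar h hk
  omega

/-- `nw.IsFactor o w e` means that the positions `o + 1, …, e` of `nw` carry the well-matched
word `w`, no arch leading in or out of them. -/
inductive IsFactor (nw : NestedWord Δ) : ℕ → MatchedWord Δ → ℕ → Prop
  | nil (o : ℕ) : IsFactor nw o .nil o
  | int {o e : ℕ} {w : MatchedWord Δ} (hw : IsFactor nw o w e) (he : nw.IsInternal (e + 1)) :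
      IsFactor nw o (.int w (nw.letter (e + 1))) (e + 1)
  | arch {o i j : ℕ} {w v : MatchedWord Δ} (hw : IsFactor nw o w i)
      (hv : IsFactor nw (i + 1) v j) (hij : nw.rel (i + 1) (j + 1)) :
      IsFactor nw o (.arch w (nw.letter (i + 1)) v (nw.letter (j + 1))) (j + 1)

theorem exists_isFactor_of_balanced {o e : ℕ} (hoe : o ≤ e) (he : e ≤ nw.len)
    (balanced : ∀ {i j}, nw.rel i j → (i ∈ Set.Ioc o e ↔ j ∈ Set.Ioc o e)) :
    ∃ w, nw.IsFactor o w e := by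
  induction e using Nat.strong_induction_on generalizing o with | _ e ih
  obtain rfl | ⟨e, rfl⟩ : o = e ∨ ∃ e', e = e' + 1 := by
    rcases e with _ | e
    · exact .inl (by omega)
    · exact .inr ⟨e, rfl⟩
  · exact ⟨.nil, .nil o⟩
  simp only [Set.mem_Ioc] at balanced ih
  by_cases hoe' : o = e + 1
  · exact hoe' ▸ ⟨.nil, .nil o⟩
  by_cases hret : nw.IsReturn (e + 1)
  · obtain ⟨i, hi⟩ := hret
    have := rel_bounds hi
    have := balanced hi
    obtain ⟨i, rfl⟩ : ∃ i', i = i' + 1 := ⟨i - 1, by omega⟩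
    have splits {i' j'} (h : nw.rel i' j') := And.intro (rel_bounds h)
      (And.intro (balanced h) (rel_laminar hi h))
    obtain ⟨w, hw⟩ := ih i (by omega) (o := o) (by omega) (by omega) fun h ↦ by
      have := splits h
      omega
    obtain ⟨v, hv⟩ := ih e (by omega) (o := i + 1) (by omega) (by omega) fun h ↦ by
      have := splits h
      omega
    exact ⟨_, hw.arch hv hi⟩
  · have hcall : ¬ nw.IsCall (e + 1) := by
      rintro ⟨j, hj⟩
      have := rel_bounds hj
      have := balanced hj
      omega
    obtain ⟨w, hw⟩ := ih e (by omega) (o := o) (by omega) (by omega) fun {i j} h ↦ by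
      have := rel_bounds h
      have := balanced h
      have : i ≠ e + 1 := fun hi ↦ hcall ⟨j, hi ▸ h⟩
      have : j ≠ e + 1 := fun hj ↦ hret ⟨i, hj ▸ h⟩
      omega
    exact ⟨_, hw.int ⟨by omega, he, hcall, hret⟩⟩

theorem exists_isFactor (nw : NestedWord Δ) : ∃ w, nw.IsFactor 0 w nw.len :=
  exists_isFactor_of_balanced (Nat.zero_le _) le_rfl fun h ↦ by
    have := rel_bounds h
    simp only [Set.mem_Ioc]
    omega

theorem isFactor_of_agrees {w : MatchedWord Δ} {o : ℕ} (hlen : o + w.word.length ≤ nw.len)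
    (hletter : ∀ k (hk : k < w.word.length), nw.letter (o + k + 1) = w.word[k])
    (hrel : ∀ i j, i ∈ Set.Ioc o (o + w.word.length) ∨ j ∈ Set.Ioc o (o + w.word.length) →
      (nw.rel i j ↔ w.rel o i j)) :
    nw.IsFactor o w (o + w.word.length) := by
  simp only [Set.mem_Ioc] at hrel
  induction w generalizing o with
  | nil => exact .nil _
  | int w a ih =>
    simp only [MatchedWord.word, List.length_append, List.length_singleton, MatchedWord.rel]
      at hlen hletter hrel ⊢
    have hw := ih (o := o) (by omega) (by grind) fun i j h ↦ hrel i j (by omega)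
    have hint : nw.IsInternal (o + w.word.length + 1) := by
      refine ⟨by omega, hlen, ?_, ?_⟩ <;>
      · rintro ⟨k, hk⟩
        have := MatchedWord.rel_bounds ((hrel _ _ (by omega)).1 hk)
        omega
    obtain rfl : nw.letter (o + w.word.length + 1) = a := by grind
    exact hw.int hint
  | arch w a v b ihw ihv =>
    simp only [MatchedWord.word, List.length_append, List.length_cons, List.length_nil]
      at hlen hletter hrel ⊢
    have hw := ihw (o := o) (by omega) (by grind) fun i j h ↦
      (hrel i j (by omega)).trans (MatchedWord.rel_arch_iff_left (by omega))
    have hv := ihv (o := o + w.word.length + 1) (by omega) (fun k hk ↦ by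
      have := hletter (w.word.length + (k + 1)) (by omega)
      simpa [List.getElem_append_right, List.getElem_append_left, hk, add_assoc, add_comm 1]
        using this) fun i j h ↦
      (hrel i j (by omega)).trans (MatchedWord.rel_arch_iff_inside h)
    have hij : nw.rel (o + w.word.length + 1) (o + w.word.length + 1 + v.word.length + 1) :=
      (hrel _ _ (by omega)).2 (.inr (.inl (by omega)))
    obtain rfl : nw.letter (o + w.word.length + 1) = a := by grind
    obtain rfl : nw.letter (o + w.word.length + 1 + v.word.length + 1) = b := by
      have := hletter (w.word.length + (v.word.length + 1)) (by omega)
      simpa [List.getElem_append_right, add_assoc, add_comm 1] using this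
    convert hw.arch hv hij using 1
    omega

end NestedWord

theorem MatchedWord.exists_isFactor {Δ : Type} {w : MatchedWord Δ} (hw : w.word ≠ []) :
    ∃ nw : NestedWord Δ, nw.IsFactor 0 w nw.len := by
  let nw : NestedWord Δ :=
    { word := w.word
      ne := hw
      rel := w.rel 0
      isNest := isNestingRel_iff.2
        ⟨fun i j h ↦ by simpa [Nat.succ_le_iff] using rel_bounds h,
          fun i j i' j' h h' ↦ rel_laminar h h'⟩ }
  have hfactor : nw.IsFactor 0 w (0 + w.word.length) :=
    NestedWord.isFactor_of_agrees (by simp [nw, NestedWord.len])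
      (fun k hk ↦ by simp [NestedWord.letter, nw, hk]) fun _ _ _ ↦ Iff.rfl
  exact ⟨nw, by simpa [nw, NestedWord.len] using hfactor⟩

namespace NWA

variable {Δ : Type} (A : NWA Δ) {nw : NestedWord Δ}

/-- The transition of the run `ρ` at position `j` is allowed. -/
def Step (nw : NestedWord Δ) (ρ : ℕ → A.Q) (j : ℕ) : Prop :=
  (nw.IsCall j → A.δcall (ρ (j - 1)) (nw.letter j) (ρ j)) ∧
  (∀ i, nw.rel i j → A.δret (ρ (j - 1)) (ρ (i - 1)) (nw.letter j) (ρ j)) ∧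
  (nw.IsInternal j → A.δint (ρ (j - 1)) (nw.letter j) (ρ j))

variable {A} in
theorem Step.congr {ρ ρ' : ℕ → A.Q} {j : ℕ} (hρ : ∀ k ≤ j, ρ k = ρ' k) (h : A.Step nw ρ j) :
    A.Step nw ρ' j := by
  have hpred : ρ (j - 1) = ρ' (j - 1) := hρ _ (Nat.sub_le _ _)
  obtain ⟨hcall, hret, hint⟩ := h
  rw [hpred, hρ j le_rfl] at hcall hint
  refine ⟨hcall, fun i hij ↦ ?_, hint⟩
  have := NestedWord.rel_bounds hij
  rw [← hpred, ← hρ j le_rfl, ← hρ (i - 1) (by omega)]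
  exact hret i hij

theorem accepts_iff_exists_run : A.accepts nw ↔
    ∃ ρ : ℕ → A.Q, A.ι (ρ 0) ∧ A.κ (ρ nw.len) ∧ ∀ j ∈ Set.Ioc 0 nw.len, A.Step nw ρ j := by
  constructor
  · rintro ⟨r, hι, hκ, hr⟩
    refine ⟨clampFun r, ?_, ?_, fun j hj ↦ hr j hj.1 hj.2⟩
    · simpa [clampFun] using hι
    · simpa [clampFun, Fin.last] using hκ
  · rintro ⟨ρ, hι, hκ, hρ⟩
    refine ⟨fun k ↦ ρ k, hι, hκ, fun j h0 hj ↦ (hρ j ⟨h0, hj⟩).congr fun k hk ↦ ?_⟩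
    simp [clampFun, hk.trans hj]

variable {A} in
theorem exists_step_update (hcall : ∀ p a, ∃ q, A.δcall p a q)
    (hint : ∀ p a, ∃ q, A.δint p a q) (hret : ∀ p r a, ∃ q, A.δret p r a q)
    (nw : NestedWord Δ) (ρ : ℕ → A.Q) (n : ℕ) :
    ∃ q, A.Step nw (Function.update ρ (n + 1) q) (n + 1) := by
  have hpred (q : A.Q) : Function.update ρ (n + 1) q n = ρ n :=
    Function.update_of_ne (by omega) _ _
  simp only [Step, Nat.add_sub_cancel, hpred, Function.update_self]
  by_cases hc : nw.IsCall (n + 1)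
  · obtain ⟨q, hq⟩ := hcall (ρ n) (nw.letter (n + 1))
    exact ⟨q, fun _ ↦ hq, fun i hi ↦ absurd hc (NestedWord.not_isCall_of_rel hi),
      fun h ↦ absurd hc h.2.2.1⟩
  by_cases hr : nw.IsReturn (n + 1)
  · obtain ⟨i, hi⟩ := hr
    obtain ⟨q, hq⟩ := hret (ρ n) (ρ (i - 1)) (nw.letter (n + 1))
    refine ⟨q, fun h ↦ absurd h hc, fun i' hi' ↦ ?_, fun h ↦ absurd ⟨i, hi⟩ h.2.2.2⟩
    obtain rfl := NestedWord.rel_left_unique hi hi'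
    have := NestedWord.rel_bounds hi
    rwa [Function.update_of_ne (by omega)]
  · obtain ⟨q, hq⟩ := hint (ρ n) (nw.letter (n + 1))
    exact ⟨q, fun h ↦ absurd h hc, fun i hi ↦ absurd ⟨i, hi⟩ hr, fun _ ↦ hq⟩

variable {A} in
theorem exists_run (hcall : ∀ p a, ∃ q, A.δcall p a q) (hint : ∀ p a, ∃ q, A.δint p a q)
    (hret : ∀ p r a, ∃ q, A.δret p r a q) (nw : NestedWord Δ) (q₀ : A.Q) (n : ℕ) :
    ∃ ρ : ℕ → A.Q, ρ 0 = q₀ ∧ ∀ j ∈ Set.Ioc 0 n, A.Step nw ρ j := by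
  induction n with
  | zero => exact ⟨fun _ ↦ q₀, rfl, by simp⟩
  | succ n ih =>
    obtain ⟨ρ, h0, hρ⟩ := ih
    obtain ⟨q, hq⟩ := exists_step_update hcall hint hret nw ρ n
    refine ⟨Function.update ρ (n + 1) q, by simpa using h0, fun j hj ↦ ?_⟩
    obtain hj' | rfl : j ≤ n ∨ j = n + 1 := Nat.le_succ_iff.1 hj.2
    · refine (hρ j ⟨hj.1, hj'⟩).congr fun k hk ↦ (Function.update_of_ne ?_ _ _).symm
      omega
    · exact hq

end NWA

namespace WNWA

open Finset Function Matrix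

variable {K Δ : Type} [CommSemiring K] (A : WNWA K Δ) {nw : NestedWord Δ}

theorem posWeight_of_rel_call {i j : ℕ} (h : nw.rel i j) (ρ : ℕ → A.Q) :
    A.posWeight nw ρ i = A.δcall (ρ (i - 1)) (nw.letter i) (ρ i) :=
  if_pos ⟨j, h⟩

theorem posWeight_of_rel_return {i j : ℕ} (h : nw.rel i j) (ρ : ℕ → A.Q) :
    A.posWeight nw ρ j = A.δret (ρ (j - 1)) (ρ (i - 1)) (nw.letter j) (ρ j) := by
  have hret : nw.IsReturn j := ⟨i, h⟩
  rw [posWeight, if_neg (NestedWord.not_isCall_of_rel h), dif_pos hret,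
    NestedWord.rel_left_unique hret.choose_spec h]

theorem posWeight_of_isInternal {j : ℕ} (h : nw.IsInternal j) (ρ : ℕ → A.Q) :
    A.posWeight nw ρ j = A.δint (ρ (j - 1)) (nw.letter j) (ρ j) := by
  rw [posWeight, if_neg h.2.2.1, dif_neg h.2.2.2]

/-- The weight of the part of the run `ρ` that reads the positions `o + 1, …, e`. -/
noncomputable def segmentWeight (nw : NestedWord Δ) (o e : ℕ) (ρ : ℕ → A.Q) : K :=
  ∏ k ∈ Ioc o e, A.posWeight nw ρ k

@[simp]
theorem segmentWeight_self (o : ℕ) (ρ : ℕ → A.Q) : A.segmentWeight nw o o ρ = 1 := by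
  simp [segmentWeight]

theorem segmentWeight_succ (o : ℕ) (ρ : ℕ → A.Q) :
    A.segmentWeight nw o (o + 1) ρ = A.posWeight nw ρ (o + 1) := by
  rw [segmentWeight, Nat.Ioc_succ_singleton, prod_singleton]

theorem segmentWeight_mul {o m e : ℕ} (hom : o ≤ m) (hme : m ≤ e) (ρ : ℕ → A.Q) :
    A.segmentWeight nw o m ρ * A.segmentWeight nw m e ρ = A.segmentWeight nw o e ρ :=
  prod_Ioc_consecutive _ hom hme

theorem segmentWeight_of_rel {i j : ℕ} (hij : nw.rel (i + 1) (j + 1)) (ρ : ℕ → A.Q) :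
    A.segmentWeight nw i (j + 1) ρ =
      A.δcall (ρ i) (nw.letter (i + 1)) (ρ (i + 1)) * (A.segmentWeight nw (i + 1) j ρ *
        A.δret (ρ j) (ρ i) (nw.letter (j + 1)) (ρ (j + 1))) := by
  have hlt : i + 1 < j + 1 := (NestedWord.rel_bounds hij).2.1
  rw [← A.segmentWeight_mul (Nat.le_succ i) hlt.le,
    ← A.segmentWeight_mul (Nat.le_of_lt_succ hlt) (Nat.le_succ j), segmentWeight_succ,
    segmentWeight_succ, A.posWeight_of_rel_call hij, A.posWeight_of_rel_return hij]
  rfl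

theorem runWeight_eq_segmentWeight (ρ : ℕ → A.Q) :
    A.runWeight nw ρ = A.segmentWeight nw 0 nw.len ρ :=
  rfl

/-- The transfer matrix of an internal letter. -/
def intMatrix (a : Δ) : Matrix A.Q A.Q K :=
  .of fun p q ↦ A.δint p a q

/-- The effect on transfer matrices of enclosing a well-matched word in an arch from `a` to `b`. -/
def archMap (a b : Δ) : Matrix A.Q A.Q K →ₗ[K] Matrix A.Q A.Q K where
  toFun N := .of fun p q ↦ ∑ r, A.δcall p a r * ∑ s, N r s * A.δret s p b q
  map_add' N N' := by
    ext p q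
    simp [add_mul, mul_add, sum_add_distrib]
  map_smul' c N := by
    ext p q
    simp [mul_sum, mul_assoc, mul_left_comm]

theorem archMap_mulVec_apply (a b : Δ) (N : Matrix A.Q A.Q K) (f : A.Q → K) (p : A.Q) :
    (A.archMap a b N *ᵥ f) p =
      ∑ r, A.δcall p a r * (N *ᵥ fun s ↦ ∑ q, A.δret s p b q * f q) r := by
  simp only [archMap, LinearMap.coe_mk, AddHom.coe_mk, mulVec, dotProduct, of_apply, mul_sum,
    sum_mul, mul_assoc]
  rw [sum_comm]
  exact sum_congr rfl fun r _ ↦ sum_comm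

open Classical in
/-- The transfer matrix of a well-matched word: its entry at `(p, q)` is the total weight of the
runs from `p` to `q` on that word. -/
noncomputable def matrix : MatchedWord Δ → Matrix A.Q A.Q K
  | .nil => 1
  | .int w a => matrix w * A.intMatrix a
  | .arch w a v b => matrix w * A.archMap a b (matrix v)

/-- The linear functional that recovers the behavior of `A` from a transfer matrix. -/
def eval : Module.Dual K (Matrix A.Q A.Q K) where
  toFun M := A.ι ⬝ᵥ M *ᵥ A.κ
  map_add' M N := by rw [add_mulVec, dotProduct_add]
  map_smul' c M := by rw [smul_mulVec, dotProduct_smul, RingHom.id_apply]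

/-- `A.HasTransferMatrix nw o e M` means that summing over the states after the positions
`o + 1, …, e` acts on functions of the last of them as multiplication by `M`. -/
structure HasTransferMatrix (nw : NestedWord Δ) (o e : ℕ) (M : Matrix A.Q A.Q K) : Prop where
  le : o ≤ e
  dependsOn : DependsOn (A.segmentWeight nw o e) (Set.Icc o e)
  sum_eq (f : A.Q → K) (ρ : ℕ → A.Q) :
    marginalSum (Ioc o e) (fun ρ' ↦ A.segmentWeight nw o e ρ' * f (ρ' e)) ρ = (M *ᵥ f) (ρ o)

namespace HasTransferMatrix

variable {A} {o m e i j : ℕ} {M N : Matrix A.Q A.Q K}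

open Classical in
theorem refl (o : ℕ) : A.HasTransferMatrix nw o o 1 where
  le := le_rfl
  dependsOn := by simp [DependsOn]
  sum_eq := by simp

theorem trans (hM : A.HasTransferMatrix nw o m M) (hN : A.HasTransferMatrix nw m e N) :
    A.HasTransferMatrix nw o e (M * N) where
  le := hM.le.trans hN.le
  dependsOn ρ ρ' h := by
    rw [← A.segmentWeight_mul hM.le hN.le, ← A.segmentWeight_mul hM.le hN.le,
      hM.dependsOn fun k hk ↦ h k ⟨hk.1, hk.2.trans hN.le⟩,
      hN.dependsOn fun k hk ↦ h k ⟨hM.le.trans hk.1, hk.2⟩]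
  sum_eq f ρ := by
    have hdep : DependsOn (A.segmentWeight nw o m) (Ioc m e : Set ℕ)ᶜ :=
      hM.dependsOn.mono fun k hk ↦ by simp [hk.2]
    simp_rw [marginalSum_Ioc_append hM.le hN.le, ← A.segmentWeight_mul hM.le hN.le, mul_assoc]
    calc
      _ = marginalSum (Ioc o m) (fun ρ' ↦ A.segmentWeight nw o m ρ' * (N *ᵥ f) (ρ' m)) ρ := by
        congr 1
        ext ρ'
        rw [marginalSum_mul_left hdep, hN.sum_eq]
      _ = _ := by rw [hM.sum_eq, mulVec_mulVec]

theorem int (h : nw.IsInternal (o + 1)) :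
    A.HasTransferMatrix nw o (o + 1) (A.intMatrix (nw.letter (o + 1))) where
  le := Nat.le_succ o
  dependsOn ρ ρ' hρ := by
    rw [segmentWeight_succ, segmentWeight_succ, A.posWeight_of_isInternal h,
      A.posWeight_of_isInternal h, Nat.add_sub_cancel, hρ o (by simp), hρ (o + 1) (by simp)]
  sum_eq f ρ := by
    rw [marginalSum_Ioc_succ]
    simp [segmentWeight_succ, A.posWeight_of_isInternal h, intMatrix, mulVec, dotProduct]

theorem arch (hij : nw.rel (i + 1) (j + 1)) (hN : A.HasTransferMatrix nw (i + 1) j N) :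
    A.HasTransferMatrix nw i (j + 1)
      (A.archMap (nw.letter (i + 1)) (nw.letter (j + 1)) N) := by
  have hle := hN.le
  have segment_update (ρ : ℕ → A.Q) (q : A.Q) :
      A.segmentWeight nw (i + 1) j (update ρ (j + 1) q) = A.segmentWeight nw (i + 1) j ρ :=
    hN.dependsOn fun k hk ↦ update_of_ne (Nat.lt_succ_of_le hk.2).ne q ρ
  refine ⟨by omega, fun ρ ρ' h ↦ ?_, fun f ρ ↦ ?_⟩
  · rw [A.segmentWeight_of_rel hij, A.segmentWeight_of_rel hij,
      hN.dependsOn fun k hk ↦ h k ⟨by have := hk.1; omega, by have := hk.2; omega⟩,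
      h i ⟨le_rfl, by omega⟩, h (i + 1) ⟨by omega, by omega⟩, h j ⟨by omega, by omega⟩,
      h (j + 1) ⟨by omega, le_rfl⟩]
  · let g (p s : A.Q) : K := ∑ q, A.δret s p (nw.letter (j + 1)) q * f q
    have sum_return (ρ' : ℕ → A.Q) : marginalSum (Ioc j (j + 1))
        (fun ρ' ↦ A.segmentWeight nw i (j + 1) ρ' * f (ρ' (j + 1))) ρ' =
        A.δcall (ρ' i) (nw.letter (i + 1)) (ρ' (i + 1)) *
          (A.segmentWeight nw (i + 1) j ρ' * g (ρ' i) (ρ' j)) := by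
      have hi : i ≠ j + 1 := by omega
      have hi' : i ≠ j := by omega
      rw [marginalSum_Ioc_succ]
      simp [A.segmentWeight_of_rel hij, segment_update, g, mul_sum, mul_assoc, hi, hi']
    have sum_inside (ρ' : ℕ → A.Q) : marginalSum (Ioc (i + 1) j)
        (fun ρ' ↦ A.δcall (ρ' i) (nw.letter (i + 1)) (ρ' (i + 1)) *
          (A.segmentWeight nw (i + 1) j ρ' * g (ρ' i) (ρ' j))) ρ' =
        A.δcall (ρ' i) (nw.letter (i + 1)) (ρ' (i + 1)) * (N *ᵥ g (ρ' i)) (ρ' (i + 1)) := by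
      rw [marginalSum_mul_left, ← hN.sum_eq]
      · congr 1
        exact marginalSum_congr fun ρ'' h ↦ by rw [h i (by simp)]
      · intro ρ₁ ρ₂ h
        dsimp only
        rw [h i (by simp), h (i + 1) (by simp)]
    rw [marginalSum_Ioc_append (Nat.le_succ i) (by omega : i + 1 ≤ j + 1),
      marginalSum_Ioc_append hle (Nat.le_succ j), marginalSum_Ioc_succ, archMap_mulVec_apply]
    simp only [funext sum_return, sum_inside]
    simp [g]

end HasTransferMatrix

theorem hasTransferMatrix_matrix {o e : ℕ} {w : MatchedWord Δ} (h : nw.IsFactor o w e) :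
    A.HasTransferMatrix nw o e (A.matrix w) := by
  induction h with
  | nil o => exact .refl o
  | int _ he ih => exact ih.trans (.int he)
  | arch _ _ hij ihw ihv => exact ihw.trans (.arch hij ihv)

theorem behavior_eq_eval_matrix {w : MatchedWord Δ} (h : nw.IsFactor 0 w nw.len) :
    A.behavior nw = A.eval (A.matrix w) := by
  have hM := A.hasTransferMatrix_matrix h
  obtain hQ | ⟨⟨q₀⟩⟩ := isEmpty_or_nonempty A.Q
  · simp [behavior, eval, dotProduct]
  let summand (ρ : ℕ → A.Q) : K := A.ι (ρ 0) * (A.segmentWeight nw 0 nw.len ρ * A.κ (ρ nw.len))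
  have hsummand : DependsOn summand (Set.Iic nw.len) := fun ρ ρ' hρ ↦ by
    dsimp only [summand]
    rw [hM.dependsOn fun k hk ↦ hρ k hk.2, hρ 0 (Nat.zero_le _), hρ nw.len Set.self_mem_Iic]
  have hrange : range (nw.len + 1) = {0} ∪ Ioc 0 nw.len := by
    ext k
    simp
  have hι : DependsOn (fun ρ : ℕ → A.Q ↦ A.ι (ρ 0)) (Ioc 0 nw.len : Set ℕ)ᶜ := fun ρ ρ' h ↦
    congrArg A.ι (h 0 (by simp))
  calc
    A.behavior nw = ∑ r : Fin (nw.len + 1) → A.Q, summand (clampFun r) := by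
      refine sum_congr rfl fun r _ ↦ ?_
      simp [summand, clampFun, runWeight_eq_segmentWeight, mul_assoc, Fin.last]
    _ = marginalSum {0} (marginalSum (Ioc 0 nw.len) summand) fun _ ↦ q₀ := by
      rw [sum_clampFun hsummand, hrange, marginalSum_union (by simp)]
    _ = ∑ q, A.ι q * (A.matrix w *ᵥ A.κ) q := by
      simp [marginalSum_singleton, summand, marginalSum_mul_left hι, hM.sum_eq]
    _ = A.eval (A.matrix w) := rfl

end WNWA

theorem exists_finite_subset_separating {R M : Type*} [CommSemiring R] [AddCommMonoid M]
    [Module R M] [IsNoetherian R (Module.Dual R M)] (F : Set (Module.Dual R M)) :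
    ∃ F₀ ⊆ F, F₀.Finite ∧ ∀ m m', (∀ f ∈ F₀, f m = f m') → ∀ f ∈ F, f m = f m' := by
  obtain ⟨F₀, hF₀, hspan⟩ := (Submodule.fg_span_iff_fg_span_finset_subset F).1
    (IsNoetherian.noetherian (R := R) _)
  refine ⟨F₀, hF₀, F₀.finite_toSet, fun m m' h f hf ↦ ?_⟩
  have hle : Submodule.span R (F₀ : Set (Module.Dual R M)) ≤
      LinearMap.eqLocus (Module.Dual.eval R M m) (Module.Dual.eval R M m') :=
    Submodule.span_le.2 h
  exact hle (hspan ▸ Submodule.subset_span hf)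

namespace WNWA

open LinearMap (mulLeft mulRight)

variable {K Δ : Type} [CommSemiring K] (A : WNWA K Δ)

/-- The functionals that send the transfer matrix of a well-matched word `w` to the value of
`WNWA.eval` on a fixed context with `w` plugged into its hole. -/
inductive IsContext : Module.Dual K (Matrix A.Q A.Q K) → Prop
  | eval : IsContext A.eval
  | int {f : Module.Dual K (Matrix A.Q A.Q K)} (hf : IsContext f) (a : Δ) :
      IsContext (f ∘ₗ mulRight K (A.intMatrix a))
  | archLeft {f : Module.Dual K (Matrix A.Q A.Q K)} (hf : IsContext f) (a : Δ)
      (v : MatchedWord Δ) (b : Δ) : IsContext (f ∘ₗ mulRight K (A.archMap a b (A.matrix v)))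
  | archInside {f : Module.Dual K (Matrix A.Q A.Q K)} (hf : IsContext f) (w : MatchedWord Δ)
      (a b : Δ) : IsContext (f ∘ₗ mulLeft K (A.matrix w) ∘ₗ A.archMap a b)

variable {A} in
theorem IsContext.exists_eval_matrix_eq {f : Module.Dual K (Matrix A.Q A.Q K)}
    (hf : A.IsContext f) (w : MatchedWord Δ) :
    ∃ w', f (A.matrix w) = A.eval (A.matrix w') := by
  induction hf generalizing w with
  | eval => exact ⟨w, rfl⟩
  | int _ a ih => exact ih (.int w a)
  | archLeft _ a v b ih => exact ih (.arch w a v b)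
  | archInside _ u a b ih => exact ih (.arch u a w b)

/-- The syntactic congruence of the series recognized by `A`: two well-matched words are congruent
if no context distinguishes them. -/
def syntacticSetoid : Setoid (MatchedWord Δ) where
  r w w' := ∀ f, A.IsContext f → f (A.matrix w) = f (A.matrix w')
  iseqv := ⟨fun _ _ _ ↦ rfl, fun h f hf ↦ (h f hf).symm,
    fun h h' f hf ↦ (h f hf).trans (h' f hf)⟩

/-- The quotient of the well-matched words by the syntactic congruence. -/
abbrev SyntacticQuotient : Type :=
  Quotient A.syntacticSetoid

namespace SyntacticQuotient

variable {A}

/-- Appending an internal letter, on the syntactic quotient. -/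
def int (a : Δ) : A.SyntacticQuotient → A.SyntacticQuotient :=
  Quotient.map (.int · a) fun _ _ h _ hf ↦ h _ (hf.int a)

/-- Appending an arch, on the syntactic quotient. -/
def arch (a b : Δ) : A.SyntacticQuotient → A.SyntacticQuotient → A.SyntacticQuotient :=
  Quotient.map₂ (.arch · a · b) fun _ w' hw v _ hv _ hf ↦
    (hw _ (hf.archLeft a v b)).trans (hv _ (hf.archInside w' a b))

/-- The value of the series recognized by `A`, on the syntactic quotient. -/
noncomputable def value : A.SyntacticQuotient → K :=
  Quotient.lift (fun w ↦ A.eval (A.matrix w)) fun _ _ h ↦ h _ .eval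

@[simp]
theorem int_mk (a : Δ) (w : MatchedWord Δ) :
    int a (⟦w⟧ : A.SyntacticQuotient) = ⟦MatchedWord.int w a⟧ :=
  rfl

@[simp]
theorem arch_mk (a b : Δ) (w v : MatchedWord Δ) :
    arch a b (⟦w⟧ : A.SyntacticQuotient) ⟦v⟧ = ⟦MatchedWord.arch w a v b⟧ :=
  rfl

end SyntacticQuotient

theorem eval_matrix_mem (w : MatchedWord Δ) :
    A.eval (A.matrix w) ∈ insert (A.eval (A.matrix .nil)) (Set.range A.behavior) := by
  by_cases hw : w.word = []
  · cases w with
    | nil => exact .inl rfl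
    | int | arch => simp [MatchedWord.word] at hw
  · obtain ⟨nw, hnw⟩ := MatchedWord.exists_isFactor hw
    exact .inr ⟨nw, A.behavior_eq_eval_matrix hnw⟩

theorem finite_syntacticQuotient [IsNoetherian K (Module.Dual K (Matrix A.Q A.Q K))]
    (hfin : (Set.range A.behavior).Finite) : Finite A.SyntacticQuotient := by
  obtain ⟨F₀, hF₀, hF₀_fin, separates⟩ := exists_finite_subset_separating {f | A.IsContext f}
  let V : Set K := insert (A.eval (A.matrix .nil)) (Set.range A.behavior)
  have : Finite F₀ := hF₀_fin
  have : Finite V := hfin.insert _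
  have mem_V (w : MatchedWord Δ) (f : F₀) : f.1 (A.matrix w) ∈ V := by
    obtain ⟨w', hw'⟩ := IsContext.exists_eval_matrix_eq (hF₀ f.2) w
    exact hw' ▸ A.eval_matrix_mem w'
  let values : A.SyntacticQuotient → F₀ → V :=
    Quotient.lift (fun w f ↦ ⟨f.1 (A.matrix w), mem_V w f⟩) fun w w' h ↦
      funext fun f ↦ Subtype.ext (h f (hF₀ f.2))
  refine Finite.of_injective values fun c c' ↦ ?_
  induction c, c' using Quotient.inductionOn₂ with | _ w w'
  intro h
  exact Quotient.sound (separates _ _ fun f hf ↦ congrArg Subtype.val (congrFun h ⟨f, hf⟩))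

/-- The automaton that computes the syntactic class of the word read since the innermost open call
and stores the letter of that call. Its return transitions are total: the value for a missing call
letter is irrelevant. -/
@[reducible]
noncomputable def syntacticNWA [Finite Δ] [Finite A.SyntacticQuotient] (T : Set K) : NWA Δ where
  Q := A.SyntacticQuotient × Option Δ
  fintQ := Fintype.ofFinite _
  ι p := p = (⟦.nil⟧, none)
  κ p := p.1.value ∈ T
  δcall _ a q := q = (⟦.nil⟧, some a)
  δint p a q := q = (p.1.int a, p.2)
  δret p r b q := q = p.2.elim r fun a ↦ (.arch a b r.1 p.1, r.2)

variable [Finite Δ] [Finite A.SyntacticQuotient] {T : Set K} {nw : NestedWord Δ}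

theorem syntacticNWA_run_eq {o e : ℕ} {w : MatchedWord Δ} (h : nw.IsFactor o w e)
    {ρ : ℕ → (A.syntacticNWA T).Q} (hρ : ∀ j ∈ Set.Ioc o e, (A.syntacticNWA T).Step nw ρ j)
    {s : Option Δ} (ho : ρ o = (⟦.nil⟧, s)) : ρ e = (⟦w⟧, s) := by
  induction h generalizing s with
  | nil o => exact ho
  | @int o e w hw he ih =>
    have hwe : o ≤ e := (A.hasTransferMatrix_matrix hw).le
    have hρe := ih (fun j hj ↦ hρ j ⟨hj.1, hj.2.trans (Nat.le_succ e)⟩) ho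
    have hstep := (hρ (e + 1) ⟨by omega, le_rfl⟩).2.2 he
    simpa [hρe] using hstep
  | @arch o i j w v hw hv hij ihw ihv =>
    have hwi : o ≤ i := (A.hasTransferMatrix_matrix hw).le
    have hvj : i + 1 ≤ j := (A.hasTransferMatrix_matrix hv).le
    have hρi := ihw (fun k hk ↦ hρ k ⟨hk.1, by have := hk.2; omega⟩) ho
    have hcall := (hρ (i + 1) ⟨by omega, by omega⟩).1 ⟨_, hij⟩
    have hρj := ihv (fun k hk ↦ hρ k ⟨by have := hk.1; omega, by have := hk.2; omega⟩) hcall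
    have hret := (hρ (j + 1) ⟨by omega, le_rfl⟩).2.1 _ hij
    simpa [hρi, hρj] using hret

theorem syntacticNWA_accepts_iff : (A.syntacticNWA T).accepts nw ↔ A.behavior nw ∈ T := by
  obtain ⟨w, hw⟩ := nw.exists_isFactor
  rw [NWA.accepts_iff_exists_run, A.behavior_eq_eval_matrix hw]
  constructor
  · rintro ⟨ρ, hι, hκ, hρ⟩
    rwa [A.syntacticNWA_run_eq hw hρ hι] at hκ
  · intro hT
    obtain ⟨ρ, h0, hρ⟩ := NWA.exists_run (A := A.syntacticNWA T) (fun _ _ ↦ ⟨_, rfl⟩)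
      (fun _ _ ↦ ⟨_, rfl⟩) (fun _ _ _ ↦ ⟨_, rfl⟩) nw (⟦.nil⟧, none) nw.len
    refine ⟨ρ, h0, ?_, hρ⟩
    rwa [A.syntacticNWA_run_eq hw hρ h0]

end WNWA

/-- Every finite subset of `K` lies in a subsemiring over which all free modules of finite rank are
Noetherian. This is the common feature of locally finite semirings and commutative rings that makes
syntactic quotients finite. Over a semiring, `IsNoetherian R R` alone does not suffice for the
Noetherianity of `Fin n → R`. -/
def LocallyNoetherianSemiring (K : Type*) [CommSemiring K] : Prop :=
  ∀ s : Finset K, ∃ R : Subsemiring K, (s : Set K) ⊆ R ∧ ∀ n : ℕ, IsNoetherian R (Fin n → R)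

theorem LocallyFiniteSemiring.locallyNoetherianSemiring {K : Type} [CommSemiring K]
    (hK : LocallyFiniteSemiring K) : LocallyNoetherianSemiring K := fun s ↦ by
  have : Finite (Subsemiring.closure (s : Set K)) := hK s
  exact ⟨_, Subsemiring.subset_closure, fun _ ↦ inferInstance⟩

theorem locallyNoetherianSemiring_of_commRing (K : Type*) [CommRing K] :
    LocallyNoetherianSemiring K := fun s ↦ by
  have : IsNoetherianRing (Subring.closure (s : Set K)) :=
    is_noetherian_subring_closure _ s.finite_toSet
  refine ⟨(Subring.closure (s : Set K)).toSubsemiring, Subring.subset_closure, fun n ↦ ?_⟩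
  change IsNoetherian (Subring.closure (s : Set K)) (Fin n → Subring.closure (s : Set K))
  infer_instance

theorem locallyNoetherianSemiring_of_forall_exists_add_eq_zero {K : Type*}
    [inst : CommSemiring K] (h : ∀ a : K, ∃ b, a + b = 0) : LocallyNoetherianSemiring K := by
  choose neg add_neg using h
  let _ : CommRing K :=
    { inst with
      neg := neg
      zsmul := letI : Neg K := ⟨neg⟩; zsmulRec
      neg_add_cancel := fun a ↦ (add_comm _ _).trans (add_neg a) }
  exact locallyNoetherianSemiring_of_commRing K

theorem isNoetherian_dual_matrix {R m n : Type*} [CommSemiring R] [Finite m] [Finite n]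
    (hR : ∀ k : ℕ, IsNoetherian R (Fin k → R)) :
    IsNoetherian R (Module.Dual R (Matrix m n R)) := by
  cases nonempty_fintype m
  cases nonempty_fintype n
  have := hR (Fintype.card (m × n))
  exact isNoetherian_of_linearEquiv
    (((Matrix.stdBasis R m n).reindex (Fintype.equivFin _)).constr R)

namespace WNWA

variable {K Δ : Type} [CommSemiring K] (A : WNWA K Δ)

/-- The weights occurring in a weighted nested word automaton. -/
def weights : Set K :=
  Set.range A.ι ∪ Set.range A.κ ∪ Set.range (fun t : A.Q × Δ × A.Q ↦ A.δcall t.1 t.2.1 t.2.2) ∪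
    Set.range (fun t : A.Q × Δ × A.Q ↦ A.δint t.1 t.2.1 t.2.2) ∪
    Set.range fun t : A.Q × A.Q × Δ × A.Q ↦ A.δret t.1 t.2.1 t.2.2.1 t.2.2.2

theorem finite_weights [Finite Δ] : A.weights.Finite := by
  simp only [weights, Set.finite_union, Set.finite_range, and_self]

variable {A}

/-- A weighted nested word automaton whose weights lie in `R`, as an automaton over `R`. -/
def codRestrict (R : Subsemiring K) (hA : A.weights ⊆ R) : WNWA R Δ where
  Q := A.Q
  ι p := ⟨A.ι p, hA (by simp [weights])⟩
  δcall p a q := ⟨A.δcall p a q, hA (by simp [weights])⟩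
  δint p a q := ⟨A.δint p a q, hA (by simp [weights])⟩
  δret p r a q := ⟨A.δret p r a q, hA (.inr ⟨(p, r, a, q), rfl⟩)⟩
  κ p := ⟨A.κ p, hA (by simp [weights])⟩

theorem coe_posWeight_codRestrict (R : Subsemiring K) (hA : A.weights ⊆ R) (nw : NestedWord Δ)
    (ρ : ℕ → A.Q) (j : ℕ) : ((codRestrict R hA).posWeight nw ρ j : K) = A.posWeight nw ρ j := by
  unfold posWeight
  split_ifs <;> rfl

theorem coe_behavior_codRestrict (R : Subsemiring K) (hA : A.weights ⊆ R) (nw : NestedWord Δ) :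
    ((codRestrict R hA).behavior nw : K) = A.behavior nw := by
  simp only [behavior, runWeight, AddSubmonoidClass.coe_finsetSum, Subsemiring.coe_mul,
    SubmonoidClass.coe_finsetProd]
  refine Finset.sum_congr rfl fun r _ ↦ ?_
  simp only [← coe_posWeight_codRestrict R hA]
  rfl

end WNWA

theorem preimage_of_regular_series_is_regular_language_general {K Δ : Type} [CommSemiring K]
    [Finite Δ] (hK : LocallyNoetherianSemiring K) {S : NestedWord Δ → K} (hreg : NWRegular S)
    (hfin : (Set.range S).Finite) (T : Set K) : NWLangRegular {nw : NestedWord Δ | S nw ∈ T} := by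
  obtain ⟨A, hA⟩ := hreg
  obtain rfl := funext hA
  obtain ⟨R, hR, noeth⟩ := hK A.finite_weights.toFinset
  let B : WNWA R Δ := WNWA.codRestrict R (by simpa using hR)
  have hB (nw : NestedWord Δ) : (B.behavior nw : K) = A.behavior nw :=
    WNWA.coe_behavior_codRestrict R _ nw
  have hBfin : (Set.range B.behavior).Finite := by
    refine Set.Finite.of_finite_image (f := ((↑) : R → K)) ?_ Subtype.val_injective.injOn
    rwa [← Set.range_comp, show (↑) ∘ B.behavior = A.behavior from funext hB]
  have := isNoetherian_dual_matrix (m := B.Q) (n := B.Q) noeth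
  have := B.finite_syntacticQuotient hBfin
  exact ⟨B.syntacticNWA ((↑) ⁻¹' T), fun nw ↦ by
    rw [B.syntacticNWA_accepts_iff, Set.mem_preimage, hB, Set.mem_ofPred_eq]⟩

/-- **Corollary (Mathissen).** Let `K` be locally finite or a (commutative) ring,
and let `S` be a regular nested word series with finite image.  Then for every
`A ⊆ K` the language `S⁻¹(A)` is a regular nested word language. -/
theorem preimage_of_regular_series_is_regular_language
    (K Δ : Type) [CommSemiring K] [Fintype Δ] (h01 : (0 : K) ≠ 1)
    (hK : LocallyFiniteSemiring K ∨ ∀ a : K, ∃ b : K, a + b = 0)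
    (S : NestedWord Δ → K) (hreg : NWRegular S)
    (hfin : (Set.range S).Finite) :
    ∀ A : Set K, NWLangRegular {nw : NestedWord Δ | S nw ∈ A} :=
  preimage_of_regular_series_is_regular_language_general
    (hK.elim (·.locallyNoetherianSemiring) locallyNoetherianSemiring_of_forall_exists_add_eq_zero)
    hreg hfin
end

section
/- Let K be a commutative semiring with 0 ≠ 1 and let R : Δ* → K be an algebraic formal power series. Then there exists a regular nested word series S : NW(Δ) → K such that π(S) = R. -/
/-! ### Algebraic formal power series -/

section Algebraic

variable {K Δ : Type} [CommSemiring K]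

open Classical in
/-- Given a family of series `(S_X)` and a word `u ∈ (Δ ∪ 𝒳)*`, the series
`u₁ S_{X₁} u₂ ⋯ u_k S_{X_k} u_{k+1}` obtained by substituting `S_X` for each
variable `X` in `u` and taking Cauchy products. -/
noncomputable def wordSeries {X : Type} (S : X → List Δ → K) :
    List (Δ ⊕ X) → List Δ → K
  | [] => fun w => if w = [] then 1 else 0
  | (Sum.inl a) :: rest => fun w =>
      match w with
      | [] => 0
      | b :: w' => if b = a then wordSeries S rest w' else 0
  | (Sum.inr x) :: rest => fun w =>
      ∑ k ∈ Finset.range (w.length + 1),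
        S x (w.take k) * wordSeries S rest (w.drop k)

/-- `(S_X)` is a solution of the algebraic system `(P_X)`. -/
def IsSolution {X : Type} (P : X → List (Δ ⊕ X) → K) (S : X → List Δ → K) : Prop :=
  ∀ x w, S x w = ∑ᶠ u : List (Δ ⊕ X), P x u * wordSeries S u w

/-- A proper algebraic system: `(P_X, Y) = (P_X, ε) = 0` for all variables `X, Y`. -/
def IsProper {X : Type} (P : X → List (Δ ⊕ X) → K) : Prop :=
  ∀ x, P x [] = 0 ∧ ∀ y : X, P x [Sum.inr y] = 0

/-- `S : Δ* → K` is an algebraic formal power series: a component of the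
(unique) quasiregular solution of a proper algebraic system with finitely
supported polynomials. -/
def IsAlgebraicSeries (K Δ : Type) [CommSemiring K] (S : List Δ → K) : Prop :=
  ∃ (X : Type) (_ : Fintype X) (P : X → List (Δ ⊕ X) → K) (Sol : X → List Δ → K),
    (∀ x, (Function.support (P x)).Finite) ∧
    IsProper P ∧ IsSolution P Sol ∧ (∀ x, Sol x [] = 0) ∧
    ∃ x₀, ∀ w, S w = Sol x₀ w

end Algebraic
/-- The projection `π(S) : Δ* → K` of a nested word series: `(π(S), w)` is the
sum of `(S, (w,ν))` over all nesting relations `ν` of width `|w|`. -/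
noncomputable def projNW {K Δ : Type} [CommSemiring K]
    (S : NestedWord Δ → K) : List Δ → K :=
  fun w => ∑ᶠ (nw : NestedWord Δ) (_ : nw.word = w), S nw

/-!
Write a proper algebraic system as `S = C + SM`, where the monomials of `C` start with a terminal
and `M` collects what follows a leading variable. Then `S = CM*`, and adding the entries of
`M⁺ = MM*` as new variables turns the system into one in Greibach normal form, all of whose
monomials start with a terminal.

A nested word over `w` is the same thing as a balanced sequence of call, internal and return types
for the positions of `w`, so the projection of the behavior of a nested word automaton sums over all
computations of a pushdown automaton whose store holds states. Such an automaton can follow the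
leftmost derivations of a system in Greibach normal form: a state is the unexpanded rest of the
right-hand side of a rule, expanding a symbol other than its last one is a call, and the matching
return exhausts the right-hand side that was entered.
-/

/-! ### Formal power series and the star of a matrix -/

/-- Formal power series over `Δ` in noncommuting variables, with coefficients in `K`; a type
synonym carrying the Cauchy product in place of the pointwise one. -/
def FormalSeries (K Δ : Type*) : Type _ := List Δ → K

namespace FormalSeries

@[ext] theorem ext {K Δ : Type*} {f g : FormalSeries K Δ} (h : ∀ w, f w = g w) : f = g := funext h

section Semiring

variable {K Δ : Type*} [Semiring K]

instance : AddCommMonoid (FormalSeries K Δ) := inferInstanceAs (AddCommMonoid (List Δ → K))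

instance : Module K (FormalSeries K Δ) := inferInstanceAs (Module K (List Δ → K))

/-- The coefficient of a series at a word, as a linear map. -/
def coeff (w : List Δ) : FormalSeries K Δ →ₗ[K] K := LinearMap.proj w

theorem coeff_apply (w : List Δ) (f : FormalSeries K Δ) : coeff w f = f w := rfl

@[simp] theorem zero_apply (w : List Δ) : (0 : FormalSeries K Δ) w = 0 := rfl

@[simp] theorem add_apply (f g : FormalSeries K Δ) (w : List Δ) : (f + g) w = f w + g w := rfl

@[simp] theorem smul_apply (c : K) (f : FormalSeries K Δ) (w : List Δ) : (c • f) w = c * f w :=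
  rfl

@[simp] theorem sum_apply {ι : Type*} (s : Finset ι) (f : ι → FormalSeries K Δ) (w : List Δ) :
    (∑ i ∈ s, f i) w = ∑ i ∈ s, f i w :=
  map_sum (coeff w) f s

/-- The left quotient `a⁻¹f` of a series by a letter. -/
def leftDeriv (a : Δ) : FormalSeries K Δ →ₗ[K] FormalSeries K Δ where
  toFun f := fun w => f (a :: w)
  map_add' _ _ := rfl
  map_smul' _ _ := rfl

@[simp] theorem leftDeriv_apply (a : Δ) (f : FormalSeries K Δ) (w : List Δ) :
    leftDeriv a f w = f (a :: w) :=
  rfl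

instance : Mul (FormalSeries K Δ) :=
  ⟨fun f g w => ∑ k ∈ Finset.range (w.length + 1), f (w.take k) * g (w.drop k)⟩

noncomputable instance : One (FormalSeries K Δ) := ⟨fun w => if w = [] then 1 else 0⟩

theorem mul_apply (f g : FormalSeries K Δ) (w : List Δ) :
    (f * g) w = ∑ k ∈ Finset.range (w.length + 1), f (w.take k) * g (w.drop k) :=
  rfl

@[simp] theorem one_nil : (1 : FormalSeries K Δ) [] = 1 := if_pos rfl

@[simp] theorem one_cons (a : Δ) (w : List Δ) : (1 : FormalSeries K Δ) (a :: w) = 0 :=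
  if_neg (List.cons_ne_nil a w)

@[simp] theorem mul_nil (f g : FormalSeries K Δ) : (f * g) [] = f [] * g [] := by
  simp [mul_apply]

theorem mul_cons (f g : FormalSeries K Δ) (a : Δ) (w : List Δ) :
    (f * g) (a :: w) = f [] * g (a :: w) + (leftDeriv a f * g) w := by
  rw [mul_apply, List.length_cons, Finset.sum_range_succ', add_comm]
  simp [mul_apply]

theorem mul_apply_congr_right {f g g' : FormalSeries K Δ} {w : List Δ}
    (h : ∀ u : List Δ, u.length ≤ w.length → g u = g' u) : (f * g) w = (f * g') w :=
  Finset.sum_congr rfl fun k _ => by rw [h (w.drop k) (by simp)]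

protected theorem add_mul (f g h : FormalSeries K Δ) : (f + g) * h = f * h + g * h := by
  ext w
  simp [mul_apply, _root_.add_mul, Finset.sum_add_distrib]

protected theorem mul_add (f g h : FormalSeries K Δ) : f * (g + h) = f * g + f * h := by
  ext w
  simp [mul_apply, _root_.mul_add, Finset.sum_add_distrib]

protected theorem smul_mul (c : K) (f g : FormalSeries K Δ) : (c • f) * g = c • (f * g) := by
  ext w
  simp [mul_apply, mul_assoc, Finset.mul_sum]

theorem leftDeriv_mul (a : Δ) (f g : FormalSeries K Δ) :
    leftDeriv a (f * g) = f [] • leftDeriv a g + leftDeriv a f * g := by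
  ext w
  simp [mul_cons]

protected theorem mul_assoc (f g h : FormalSeries K Δ) : f * g * h = f * (g * h) := by
  ext w
  induction w generalizing f g h with
  | nil => simp [_root_.mul_assoc]
  | cons a w ih =>
    simp only [mul_cons, leftDeriv_mul, FormalSeries.add_mul, FormalSeries.smul_mul, add_apply,
      smul_apply, mul_nil, ih, _root_.mul_add, _root_.mul_assoc, add_assoc]

@[simp] theorem leftDeriv_one (a : Δ) : leftDeriv a (1 : FormalSeries K Δ) = 0 := by
  ext w
  simp

protected theorem one_mul (f : FormalSeries K Δ) : 1 * f = f := by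
  ext w
  cases w with
  | nil => simp
  | cons a w => simp [mul_cons, leftDeriv_one, mul_apply (0 : FormalSeries K Δ)]

protected theorem mul_one (f : FormalSeries K Δ) : f * 1 = f := by
  ext w
  induction w generalizing f with
  | nil => simp
  | cons a w ih => simp [mul_cons, ih]

noncomputable instance : Semiring (FormalSeries K Δ) where
  left_distrib := FormalSeries.mul_add
  right_distrib := FormalSeries.add_mul
  zero_mul f := by ext w; simp [mul_apply]
  mul_zero f := by ext w; simp [mul_apply]
  mul_assoc := FormalSeries.mul_assoc
  one_mul := FormalSeries.one_mul
  mul_one := FormalSeries.mul_one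

theorem leftDeriv_mul_of_nil_eq_zero (a : Δ) {f : FormalSeries K Δ} (hf : f [] = 0)
    (g : FormalSeries K Δ) : leftDeriv a (f * g) = leftDeriv a f * g := by
  rw [leftDeriv_mul, hf, zero_smul, zero_add]

open Classical in
/-- The series consisting of the single word `b`. -/
noncomputable def letter (b : Δ) : FormalSeries K Δ := fun w => if w = [b] then 1 else 0

@[simp] theorem letter_nil (b : Δ) : (letter b : FormalSeries K Δ) [] = 0 := by
  simp [letter]

open Classical in
theorem leftDeriv_letter (a b : Δ) :
    leftDeriv a (letter b : FormalSeries K Δ) = if a = b then 1 else 0 := by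
  ext w
  by_cases h : a = b
  · cases w <;> simp [letter, h]
  · simp [letter, h]

end Semiring

section Star

variable {K Δ X : Type*} [Semiring K] [Fintype X] [DecidableEq X]

theorem matrix_pow_apply_eq_zero {M : Matrix X X (FormalSeries K Δ)} (hM : ∀ y x, M y x [] = 0)
    {n : ℕ} {w : List Δ} (hw : w.length < n) (y x : X) : (M ^ n) y x w = 0 := by
  induction n generalizing w y x with
  | zero => exact absurd hw (Nat.not_lt_zero _)
  | succ n ih =>
    rw [pow_succ', Matrix.mul_apply, sum_apply]
    refine Finset.sum_eq_zero fun z _ => Finset.sum_eq_zero fun k _ => ?_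
    cases k with
    | zero => rw [List.take_zero, hM, zero_mul]
    | succ k =>
      by_cases hn : w = []
      · rw [hn, List.take_nil, hM, zero_mul]
      · have := List.length_pos_iff.mpr hn
        rw [ih (by rw [List.length_drop]; omega), mul_zero]

/-- The star `∑ Mⁿ` of a matrix of series. The sum is truncated at the length of the word, so it
is the intended one only if all entries of `M` have constant term `0`. -/
noncomputable def matrixStar (M : Matrix X X (FormalSeries K Δ)) :
    Matrix X X (FormalSeries K Δ) :=
  fun y x w => (∑ i ∈ Finset.range (w.length + 1), M ^ i) y x w

theorem matrixStar_apply {M : Matrix X X (FormalSeries K Δ)} (hM : ∀ y x, M y x [] = 0)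
    {N : ℕ} {w : List Δ} (hw : w.length < N) (y x : X) :
    matrixStar M y x w = (∑ i ∈ Finset.range N, M ^ i) y x w := by
  simp only [matrixStar, Matrix.sum_apply, sum_apply]
  refine Finset.sum_subset (Finset.range_mono hw) fun i _ hi => ?_
  exact matrix_pow_apply_eq_zero hM (by simpa using hi) y x

theorem mul_matrixStar_apply {M : Matrix X X (FormalSeries K Δ)} (hM : ∀ y x, M y x [] = 0)
    {N : ℕ} {w : List Δ} (hw : w.length < N) (f : FormalSeries K Δ) (y x : X) :
    (f * matrixStar M y x) w = (f * (∑ i ∈ Finset.range N, M ^ i) y x) w :=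
  mul_apply_congr_right fun _ hu => matrixStar_apply hM (hu.trans_lt hw) y x

theorem matrixStar_eq {M : Matrix X X (FormalSeries K Δ)} (hM : ∀ y x, M y x [] = 0) :
    matrixStar M = 1 + M * matrixStar M := by
  ext y x w
  rw [matrixStar_apply hM (Nat.lt_succ_of_lt (Nat.lt_succ_self w.length)), geom_sum_succ,
    add_comm]
  simp only [Matrix.add_apply, Matrix.mul_apply, add_apply, sum_apply,
    mul_matrixStar_apply hM (Nat.lt_succ_self w.length)]

open Matrix in
theorem eq_vecMul_matrixStar {M : Matrix X X (FormalSeries K Δ)} (hM : ∀ y x, M y x [] = 0)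
    {C D : X → FormalSeries K Δ} (h : D = C + D ᵥ* M) : D = C ᵥ* matrixStar M := by
  have unrolled (N : ℕ) : D = C ᵥ* (∑ i ∈ Finset.range N, M ^ i) + D ᵥ* M ^ N := by
    induction N with
    | zero => simp
    | succ N ih =>
      calc D = C ᵥ* (∑ i ∈ Finset.range N, M ^ i) + (C + D ᵥ* M) ᵥ* M ^ N := by rw [← h]; exact ih
        _ = _ := by
          rw [Finset.sum_range_succ, vecMul_add, add_vecMul, vecMul_vecMul, ← pow_succ', add_assoc]
  ext x w
  have remainder_eq_zero : (D ᵥ* M ^ (w.length + 1)) x w = 0 := by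
    simp only [vecMul, dotProduct, sum_apply]
    refine Finset.sum_eq_zero fun y _ => ?_
    rw [mul_apply_congr_right (g' := 0) fun u hu =>
      matrix_pow_apply_eq_zero hM (Nat.lt_succ_of_le hu) y x, mul_zero, zero_apply]
  rw [congrFun (unrolled (w.length + 1)) x, Pi.add_apply, add_apply, remainder_eq_zero, add_zero]
  simp only [vecMul, dotProduct, sum_apply, mul_matrixStar_apply hM (Nat.lt_succ_self w.length)]

end Star

end FormalSeries

/-! ### Greibach normal form -/

section WordSpan

variable {Y Z : Type*}

/-- The multiplicative extension of an assignment `V` of the letters to words. -/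
def wordValue {M : Type*} [Monoid M] (V : Y → M) (u : List Y) : M := (u.map V).prod

@[simp] theorem wordValue_nil {M : Type*} [Monoid M] (V : Y → M) : wordValue V [] = 1 := rfl

@[simp] theorem wordValue_cons {M : Type*} [Monoid M] (V : Y → M) (y : Y) (u : List Y) :
    wordValue V (y :: u) = V y * wordValue V u :=
  List.prod_cons

@[simp] theorem wordValue_append {M : Type*} [Monoid M] (V : Y → M) (u v : List Y) :
    wordValue V (u ++ v) = wordValue V u * wordValue V v := by
  simp [wordValue]

variable {K A : Type*} [CommSemiring K] [Semiring A] [Algebra K A]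

variable (K) in
/-- The values of the polynomials over `K` all of whose monomials are words in `L`. -/
def wordSpan (V : Y → A) (L : Set (List Y)) : Submodule K A := Submodule.span K (wordValue V '' L)

theorem wordValue_mem_wordSpan {V : Y → A} {L : Set (List Y)} {u : List Y} (hu : u ∈ L) :
    wordValue V u ∈ wordSpan K V L :=
  Submodule.subset_span ⟨u, hu, rfl⟩

theorem wordSpan_le {V : Y → A} {L : Set (List Y)} {p : Submodule K A} :
    wordSpan K V L ≤ p ↔ ∀ u ∈ L, wordValue V u ∈ p := by
  rw [wordSpan, Submodule.span_le, Set.image_subset_iff]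
  rfl

theorem mul_mem_wordSpan {V : Y → A} {L L' L'' : Set (List Y)}
    (hL : ∀ u ∈ L, ∀ v ∈ L', u ++ v ∈ L'') {f g : A}
    (hf : f ∈ wordSpan K V L) (hg : g ∈ wordSpan K V L') : f * g ∈ wordSpan K V L'' := by
  have span_mul_le : wordSpan K V L * wordSpan K V L' ≤ wordSpan K V L'' := by
    rw [wordSpan, wordSpan, Submodule.span_mul_span, Submodule.span_le]
    rintro _ ⟨_, ⟨u, hu, rfl⟩, _, ⟨v, hv, rfl⟩, rfl⟩
    simpa using wordValue_mem_wordSpan (K := K) (V := V) (hL u hu v hv)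
  exact span_mul_le (Submodule.mul_mem_mul hf hg)

theorem wordSpan_comp_le {V : Y → A} {φ : Z → Y} {L : Set (List Z)} {L' : Set (List Y)}
    (hL : Set.MapsTo (List.map φ) L L') : wordSpan K (V ∘ φ) L ≤ wordSpan K V L' := by
  refine wordSpan_le.mpr fun u hu => ?_
  have value_map : wordValue (V ∘ φ) u = wordValue V (u.map φ) := by simp [wordValue]
  exact value_map ▸ wordValue_mem_wordSpan (hL hu)

end WordSpan

namespace FormalSeries

section Greibach

variable {K Δ X : Type*} [CommSemiring K]

protected theorem mul_smul (c : K) (f g : FormalSeries K Δ) : f * (c • g) = c • (f * g) := by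
  ext w
  simp [mul_apply, mul_left_comm, Finset.mul_sum]

noncomputable instance : Algebra K (FormalSeries K Δ) :=
  Algebra.ofModule FormalSeries.smul_mul FormalSeries.mul_smul

/-- The series denoted by a symbol: a terminal denotes itself, a variable its component of `S`. -/
noncomputable def symbolValue (S : X → FormalSeries K Δ) : Δ ⊕ X → FormalSeries K Δ :=
  Sum.elim letter S

theorem symbolValue_nil {S : X → FormalSeries K Δ} (hS : ∀ x, S x [] = 0) (s : Δ ⊕ X) :
    symbolValue S s [] = 0 := by
  cases s with
  | inl a => exact letter_nil a
  | inr x => exact hS x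

/-- The sentential forms starting with a terminal, i.e. the admissible monomials of a system in
Greibach normal form. -/
def terminalHeaded (Δ X : Type*) : Set (List (Δ ⊕ X)) := {u | ∃ a v, u = Sum.inl a :: v}

/-- The admissible monomials of a proper system: neither the empty word nor a single variable. -/
def properWords (Δ X : Type*) : Set (List (Δ ⊕ X)) := {u | u ≠ [] ∧ ∀ y, u ≠ [Sum.inr y]}

theorem nil_eq_zero_of_mem_wordSpan {Y : Type*} {V : Y → FormalSeries K Δ} {L : Set (List Y)}
    (hL : ∀ u ∈ L, ∃ y v, u = y :: v ∧ V y [] = 0) {f : FormalSeries K Δ}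
    (hf : f ∈ wordSpan K V L) : f [] = 0 := by
  suffices h : wordSpan K V L ≤ LinearMap.ker (coeff []) from h hf
  refine wordSpan_le.mpr fun u hu => ?_
  obtain ⟨y, v, rfl, hy⟩ := hL u hu
  simp [coeff_apply, hy]

theorem mul_mem_terminalHeaded {V : Δ ⊕ X → FormalSeries K Δ} {f g : FormalSeries K Δ}
    (hf : f ∈ wordSpan K V (terminalHeaded Δ X)) (hg : g ∈ wordSpan K V Set.univ) :
    f * g ∈ wordSpan K V (terminalHeaded Δ X) :=
  mul_mem_wordSpan (by rintro _ ⟨a, v, rfl⟩ v' _; exact ⟨a, v ++ v', rfl⟩) hf hg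

theorem exists_leftRecursion [Fintype X] {S : X → FormalSeries K Δ} {f : FormalSeries K Δ}
    (hf : f ∈ wordSpan K (symbolValue S) (properWords Δ X)) :
    ∃ c ∈ wordSpan K (symbolValue S) (terminalHeaded Δ X), ∃ m : X → FormalSeries K Δ,
      (∀ y, m y ∈ wordSpan K (symbolValue S) {[]}ᶜ) ∧ f = c + ∑ y, S y * m y := by
  classical
  induction hf using Submodule.span_induction with
  | mem f hf =>
    obtain ⟨u, ⟨hu, hu'⟩, rfl⟩ := hf
    match u, hu, hu' with
    | Sum.inl a :: v, _, _ =>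
      exact ⟨_, wordValue_mem_wordSpan ⟨a, v, rfl⟩, 0, fun _ => zero_mem _, by simp⟩
    | Sum.inr x :: v, _, hv =>
      refine ⟨0, zero_mem _, Pi.single x (wordValue (symbolValue S) v), fun y => ?_, ?_⟩
      · obtain rfl | hy := eq_or_ne y x
        · rw [Pi.single_eq_same]
          exact wordValue_mem_wordSpan fun h : v = [] => hv y (h ▸ rfl)
        · rw [Pi.single_eq_of_ne hy]
          exact zero_mem _
      · simp [Pi.single_apply, symbolValue]
  | zero => exact ⟨0, zero_mem _, 0, fun _ => zero_mem _, by simp⟩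
  | add f g _ _ ihf ihg =>
    obtain ⟨c, hc, m, hm, rfl⟩ := ihf
    obtain ⟨c', hc', m', hm', rfl⟩ := ihg
    refine ⟨c + c', add_mem hc hc', m + m', fun y => add_mem (hm y) (hm' y), ?_⟩
    simp only [Pi.add_apply, mul_add, Finset.sum_add_distrib]
    abel
  | smul k f _ ih =>
    obtain ⟨c, hc, m, hm, rfl⟩ := ih
    refine ⟨k • c, Submodule.smul_mem _ k hc, k • m, fun y => Submodule.smul_mem _ k (hm y), ?_⟩
    simp only [Pi.smul_apply, smul_add, mul_smul_comm, Finset.smul_sum]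

/-- The extension of a family of series, written `S = C + SM`, by the entries of `M⁺ = MM*`; the
extended family solves a system in Greibach normal form. -/
noncomputable def adjoinPlus [Fintype X] [DecidableEq X] (S : X → FormalSeries K Δ)
    (M : Matrix X X (FormalSeries K Δ)) : X ⊕ X × X → FormalSeries K Δ :=
  Sum.elim S fun p => (M * matrixStar M) p.1 p.2

section AdjoinPlus

variable [Fintype X] [DecidableEq X] {S : X → FormalSeries K Δ}
  {M : Matrix X X (FormalSeries K Δ)}

theorem wordSpan_le_adjoinPlus {L : Set (List (Δ ⊕ X))} {L' : Set (List (Δ ⊕ (X ⊕ X × X)))}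
    (hL : Set.MapsTo (List.map (Sum.map id Sum.inl)) L L') :
    wordSpan K (symbolValue S) L ≤ wordSpan K (symbolValue (adjoinPlus S M)) L' := by
  have value_comp : symbolValue S = symbolValue (adjoinPlus S M) ∘ Sum.map id Sum.inl := by
    ext (a | x) w <;> rfl
  exact value_comp ▸ wordSpan_comp_le hL

theorem matrixStar_mem_wordSpan (hM : ∀ y x, M y x [] = 0) (y x : X) :
    matrixStar M y x ∈ wordSpan K (symbolValue (adjoinPlus S M)) Set.univ := by
  rw [matrixStar_eq hM, Matrix.add_apply, Matrix.one_apply]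
  refine add_mem ?_ ?_
  · split_ifs
    · exact wordValue_mem_wordSpan (u := []) trivial
    · exact zero_mem _
  · have := wordValue_mem_wordSpan (K := K) (V := symbolValue (adjoinPlus S M))
      (Set.mem_univ [Sum.inr (Sum.inr (y, x))])
    simpa [symbolValue, adjoinPlus] using this

open Matrix in
theorem adjoinPlus_mem_terminalHeaded (hS : ∀ x, S x [] = 0) {C : X → FormalSeries K Δ}
    (hC : ∀ x, C x ∈ wordSpan K (symbolValue S) (terminalHeaded Δ X))
    (hM : ∀ y x, M y x ∈ wordSpan K (symbolValue S) {[]}ᶜ) (h : S = C + S ᵥ* M)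
    (z : X ⊕ X × X) :
    adjoinPlus S M z ∈
      wordSpan K (symbolValue (adjoinPlus S M)) (terminalHeaded Δ (X ⊕ X × X)) := by
  have M_nil (y x : X) : M y x [] = 0 :=
    nil_eq_zero_of_mem_wordSpan (fun u hu => (List.exists_cons_of_ne_nil hu).imp fun s =>
      Exists.imp fun _ h => ⟨h, symbolValue_nil hS s⟩) (hM y x)
  have headed_map : Set.MapsTo (List.map (Sum.map id Sum.inl)) (terminalHeaded Δ X)
      (terminalHeaded Δ (X ⊕ X × X)) := by
    rintro _ ⟨a, v, rfl⟩
    exact ⟨a, _, rfl⟩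
  have S_mem (x : X) :
      S x ∈ wordSpan K (symbolValue (adjoinPlus S M)) (terminalHeaded Δ (X ⊕ X × X)) := by
    rw [congrFun (eq_vecMul_matrixStar M_nil h) x]
    exact sum_mem fun y _ => mul_mem_terminalHeaded (wordSpan_le_adjoinPlus headed_map (hC y))
      (matrixStar_mem_wordSpan M_nil y x)
  have nonempty_le : wordSpan K (symbolValue S) {[]}ᶜ ≤
      wordSpan K (symbolValue (adjoinPlus S M)) (terminalHeaded Δ (X ⊕ X × X)) := by
    refine wordSpan_le.mpr fun u hu => ?_
    match u, hu with
    | Sum.inl a :: v, _ =>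
      exact wordSpan_le_adjoinPlus headed_map (wordValue_mem_wordSpan ⟨a, v, rfl⟩)
    | Sum.inr x :: v, _ =>
      rw [wordValue_cons]
      exact mul_mem_terminalHeaded (S_mem x) <| wordSpan_le_adjoinPlus (Set.mapsTo_univ _ Set.univ)
        (wordValue_mem_wordSpan trivial)
  rcases z with x | ⟨y, x⟩
  · exact S_mem x
  · exact sum_mem fun z _ => mul_mem_terminalHeaded (nonempty_le (hM y z))
      (matrixStar_mem_wordSpan M_nil z x)

end AdjoinPlus

theorem exists_greibach [Finite X] {S : X → FormalSeries K Δ} (hS : ∀ x, S x [] = 0)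
    (h : ∀ x, S x ∈ wordSpan K (symbolValue S) (properWords Δ X)) :
    ∃ S' : X ⊕ X × X → FormalSeries K Δ, (∀ x, S' (Sum.inl x) = S x) ∧
      ∀ z, S' z ∈ wordSpan K (symbolValue S') (terminalHeaded Δ (X ⊕ X × X)) := by
  classical
  have := Fintype.ofFinite X
  choose C hC m hm decomposition using fun x => exists_leftRecursion (h x)
  exact ⟨adjoinPlus S fun y x => m x y, fun _ => rfl,
    adjoinPlus_mem_terminalHeaded hS hC (fun y x => hm x y) (funext decomposition)⟩

end Greibach

section AlgebraicSystem

variable {K Δ X : Type} [CommSemiring K]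

open Classical in
theorem wordSeries_eq_wordValue (S : X → FormalSeries K Δ) (u : List (Δ ⊕ X)) :
    wordSeries S u = wordValue (symbolValue S) u := by
  induction u with
  | nil => rfl
  | cons s u ih =>
    rw [wordValue_cons]
    funext w
    match s, w with
    | Sum.inr x, w => exact congrArg (fun f : FormalSeries K Δ => (S x * f) w) ih
    | Sum.inl a, [] => simp [wordSeries, symbolValue]
    | Sum.inl a, b :: w =>
      have wordSeries_eq : wordSeries S (Sum.inl a :: u) (b :: w) =
          if b = a then wordValue (symbolValue S) u w else 0 :=
        congrArg (fun f : FormalSeries K Δ => if b = a then f w else 0) ih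
      rw [wordSeries_eq, mul_cons, symbolValue, Sum.elim_inl, letter_nil, leftDeriv_letter]
      split_ifs <;> simp

theorem mem_wordSpan_of_isSolution {P : X → List (Δ ⊕ X) → K}
    (finite_support : ∀ x, (Function.support (P x)).Finite) (hP : IsProper P)
    {S : X → FormalSeries K Δ} (hS : IsSolution P S) (x : X) :
    S x ∈ wordSpan K (symbolValue S) (properWords Δ X) := by
  have S_eq : S x = ∑ u ∈ (finite_support x).toFinset, P x u • wordValue (symbolValue S) u := by
    ext w
    rw [hS x w, finsum_eq_sum_of_support_subset (s := (finite_support x).toFinset)]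
    · simp only [wordSeries_eq_wordValue, sum_apply, smul_apply]
    · rw [Set.Finite.coe_toFinset]
      exact Function.support_mul_subset_left (P x) fun u => wordSeries S u w
  rw [S_eq]
  refine sum_mem fun u hu => Submodule.smul_mem _ _ (wordValue_mem_wordSpan ?_)
  have hu' : P x u ≠ 0 := by simpa using hu
  exact ⟨fun h => hu' (h ▸ (hP x).1), fun y h => hu' (h ▸ (hP x).2 y)⟩

end AlgebraicSystem

end FormalSeries

/-! ### Nested words as balanced sequences of types -/

/-- The three kinds of positions of a nested word. -/
inductive PositionType
  | call
  | internal
  | ret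
  deriving DecidableEq

namespace PositionType

instance : Fintype PositionType := ⟨{call, internal, ret}, fun p => by cases p <;> decide⟩

theorem sum_univ {M : Type*} [AddCommMonoid M] (f : PositionType → M) :
    ∑ x, f x = f call + f internal + f ret := by
  simp [Finset.univ, Fintype.elems, add_assoc]

/-- The effect on a pushdown store of reading a position; it is `x` that a call pushes. -/
def updateStack {α : Type*} : PositionType → α → List α → List α
  | call, x, σ => x :: σ
  | internal, _, σ => σ
  | ret, _, σ => σ.tail

theorem map_updateStack {α β : Type*} (f : α → β) (p : PositionType) (x : α) (σ : List α) :
    (p.updateStack x σ).map f = p.updateStack (f x) (σ.map f) := by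
  cases p <;> simp [updateStack]

end PositionType

open PositionType

section Matching

/-- The calls among the positions `1, …, k` that no return among them matches, latest first, when
position `j` has type `t j`. -/
def openCalls (t : ℕ → PositionType) : ℕ → List ℕ
  | 0 => []
  | k + 1 => (t (k + 1)).updateStack (k + 1) (openCalls t k)

/-- Every return matches the latest call that is still open. -/
def matching (t : ℕ → PositionType) (x y : ℕ) : Prop :=
  t y = ret ∧ (openCalls t (y - 1)).head? = some x

/-- Among the positions `1, …, n`, every return has a call to match and every call gets matched. -/
def IsBalanced (t : ℕ → PositionType) (n : ℕ) : Prop :=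
  (∀ k < n, t (k + 1) = ret → openCalls t k ≠ []) ∧ openCalls t n = []

variable {t : ℕ → PositionType} {k m n x y : ℕ}

theorem openCalls_congr {t' : ℕ → PositionType} (h : ∀ j ≤ k, t j = t' j) :
    openCalls t k = openCalls t' k := by
  induction k with
  | zero => rfl
  | succ k ih => rw [openCalls, openCalls, h _ le_rfl, ih fun j hj => h j (by omega)]

theorem mem_openCalls (hx : x ∈ openCalls t k) : 1 ≤ x ∧ x ≤ k ∧ t x = call := by
  induction k with
  | zero => simp [openCalls] at hx
  | succ k ih =>
    cases ht : t (k + 1) with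
    | call =>
      rw [openCalls, ht] at hx
      obtain rfl | hx := List.mem_cons.mp hx
      · exact ⟨by omega, le_rfl, ht⟩
      · exact (ih hx).imp_right (And.imp_left Nat.le_succ_of_le)
    | internal =>
      rw [openCalls, ht] at hx
      exact (ih hx).imp_right (And.imp_left Nat.le_succ_of_le)
    | ret =>
      rw [openCalls, ht] at hx
      exact (ih (List.mem_of_mem_tail hx)).imp_right (And.imp_left Nat.le_succ_of_le)

theorem pairwise_openCalls (t : ℕ → PositionType) (k : ℕ) :
    (openCalls t k).Pairwise (· > ·) := by
  induction k with
  | zero => exact List.Pairwise.nil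
  | succ k ih =>
    rw [openCalls]
    cases t (k + 1) with
    | call =>
      exact List.pairwise_cons.mpr ⟨fun x hx => Nat.lt_succ_of_le (mem_openCalls hx).2.1, ih⟩
    | internal => exact ih
    | ret => exact ih.tail

theorem le_of_head?_openCalls (hx : (openCalls t k).head? = some x) (hy : y ∈ openCalls t k) :
    y ≤ x := by
  obtain ⟨σ, h⟩ := List.head?_eq_some_iff.mp hx
  have sorted := pairwise_openCalls t k
  rw [h] at hy sorted
  obtain rfl | hy := List.mem_cons.mp hy
  · exact le_rfl
  · exact (List.rel_of_pairwise_cons sorted hy).le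

theorem matching.mem_openCalls (h : matching t x y) : x ∈ openCalls t (y - 1) :=
  List.mem_of_mem_head? h.2

theorem mem_openCalls_succ :
    x ∈ openCalls t (k + 1) ↔
      x = k + 1 ∧ t (k + 1) = call ∨ x ∈ openCalls t k ∧ ¬ matching t x (k + 1) := by
  rw [matching, Nat.add_sub_cancel, openCalls]
  have sorted := pairwise_openCalls t k
  cases t (k + 1) with
  | call => simp [updateStack]
  | internal => simp [updateStack]
  | ret =>
    cases h : openCalls t k with
    | nil => simp [updateStack]
    | cons y σ =>
      rw [h] at sorted
      have hx : x ∈ σ → y ≠ x := fun hx => (List.rel_of_pairwise_cons sorted hx).ne'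
      simp only [updateStack, List.tail_cons, reduceCtorEq, and_false, false_or, List.mem_cons,
        List.head?_cons, Option.some.injEq, true_and]
      grind

theorem mem_openCalls_of_le (hx : x ∈ openCalls t m) (hxk : x ≤ k) (hkm : k ≤ m) :
    x ∈ openCalls t k := by
  induction m, hkm using Nat.le_induction with
  | base => exact hx
  | succ m _ ih =>
    obtain ⟨rfl, -⟩ | ⟨hx, -⟩ := mem_openCalls_succ.mp hx
    · omega
    · exact ih hx

theorem exists_matching (hk : x ∈ openCalls t k) (hkm : k ≤ m) (hm : x ∉ openCalls t m) :
    ∃ y, matching t x y := by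
  induction m, hkm using Nat.le_induction with
  | base => exact absurd hk hm
  | succ m _ ih =>
    by_contra! unmatched
    refine hm (mem_openCalls_succ.mpr (Or.inr ⟨?_, unmatched _⟩))
    by_contra h
    exact (ih h).elim unmatched

theorem matching.lt (h : matching t x y) : 1 ≤ x ∧ x < y ∧ t x = call := by
  obtain ⟨one_le, le, hx⟩ := _root_.mem_openCalls h.mem_openCalls
  exact ⟨one_le, by omega, hx⟩

theorem matching.le_of_matching {y' : ℕ} (h : matching t x y) (h' : matching t x y') :
    y' ≤ y := by
  by_contra! lt
  have still_open : x ∈ openCalls t y :=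
    mem_openCalls_of_le h'.mem_openCalls h.lt.2.1.le (Nat.le_pred_of_lt lt)
  obtain ⟨k, rfl⟩ : ∃ k, y = k + 1 := Nat.exists_eq_add_one.mpr (by have := h.lt; omega)
  obtain ⟨rfl, -⟩ | ⟨-, unmatched⟩ := mem_openCalls_succ.mp still_open
  · exact absurd h.lt.2.1 (lt_irrefl _)
  · exact unmatched h

theorem matching.left_unique {x' : ℕ} (h : matching t x y) (h' : matching t x' y) : x = x' :=
  Option.some_injective _ (h.2.symm.trans h'.2)

theorem isNestingRel_matching (ht : ∀ j, n < j → t j = internal) :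
    IsNestingRel n (matching t) := by
  refine ⟨fun i j h => ⟨h.lt.1, h.lt.2.1, ?_⟩,
    fun i j j' h h' => (h'.le_of_matching h).antisymm (h.le_of_matching h'),
    fun i i' j h h' => h.left_unique h', fun i j i' j' h h' hi => ?_⟩
  · by_contra! lt
    simpa [ht j lt] using h.1
  · by_contra! crossing
    have call_ne_ret : i' ≠ j := by
      rintro rfl
      simpa [h'.lt.2.2] using h.1
    have returns_ne : j ≠ j' := by
      rintro rfl
      exact hi.ne (h.left_unique h')
    have open_at_return : i' ∈ openCalls t (j - 1) :=
      mem_openCalls_of_le h'.mem_openCalls (by omega) (by omega)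
    exact hi.not_ge (le_of_head?_openCalls h.2 open_at_return)

end Matching

section PosType

open Classical in
/-- The type of position `j` under the relation `ν`. -/
noncomputable def posType (ν : ℕ → ℕ → Prop) (j : ℕ) : PositionType :=
  if ∃ i, ν j i then call else if ∃ i, ν i j then ret else internal

variable {t : ℕ → PositionType} {ν : ℕ → ℕ → Prop} {k n x y : ℕ}

theorem posType_eq_call_iff : posType ν x = call ↔ ∃ y, ν x y := by
  unfold posType
  split_ifs <;> simp_all

theorem IsNestingRel.posType_eq_ret_iff (hν : IsNestingRel n ν) :
    posType ν y = ret ↔ ∃ x, ν x y := by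
  obtain ⟨bounds, -, -, noncrossing⟩ := hν
  have not_call : (∃ x, ν x y) → ¬ ∃ z, ν y z := by
    rintro ⟨x, hx⟩ ⟨z, hz⟩
    have := noncrossing x y y z hx hz (bounds x y hx).2.1
    have := bounds y z hz
    omega
  unfold posType
  split_ifs <;> simp_all

theorem IsNestingRel.head?_openCalls (hν : IsNestingRel n ν)
    (mem_iff : ∀ x, x ∈ openCalls (posType ν) k ↔ x ≤ k ∧ ∃ y, k < y ∧ ν x y)
    (h : ν x (k + 1)) : (openCalls (posType ν) k).head? = some x := by
  have x_mem : x ∈ openCalls (posType ν) k :=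
    (mem_iff x).mpr ⟨Nat.le_of_lt_succ (hν.1 _ _ h).2.1, k + 1, k.lt_succ_self, h⟩
  obtain ⟨z, hz⟩ := Option.isSome_iff_exists.mp
    (List.isSome_head?.mpr (List.ne_nil_of_mem x_mem))
  obtain ⟨z_le, y, hy, hzy⟩ := (mem_iff z).mp (List.mem_of_mem_head? hz)
  obtain rfl | lt := (le_of_head?_openCalls hz x_mem).eq_or_lt
  · exact hz
  · have := hν.2.2.2 x (k + 1) z y h hzy lt
    omega

theorem IsNestingRel.matching_posType_succ (hν : IsNestingRel n ν)
    (mem_iff : ∀ x, x ∈ openCalls (posType ν) k ↔ x ≤ k ∧ ∃ y, k < y ∧ ν x y) :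
    matching (posType ν) x (k + 1) ↔ ν x (k + 1) := by
  refine ⟨fun ⟨is_return, head_eq⟩ => ?_, fun h =>
    ⟨hν.posType_eq_ret_iff.mpr ⟨x, h⟩, hν.head?_openCalls mem_iff h⟩⟩
  obtain ⟨z, hz⟩ := hν.posType_eq_ret_iff.mp is_return
  obtain rfl : x = z := Option.some_injective _ (head_eq.symm.trans (hν.head?_openCalls mem_iff hz))
  exact hz

theorem IsNestingRel.mem_openCalls_posType (hν : IsNestingRel n ν) :
    x ∈ openCalls (posType ν) k ↔ x ≤ k ∧ ∃ y, k < y ∧ ν x y := by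
  induction k generalizing x with
  | zero =>
    refine ⟨fun h => absurd h List.not_mem_nil, fun ⟨_, y, _, h⟩ => ?_⟩
    exact absurd (hν.1 x y h).1 (by omega)
  | succ k ih =>
    rw [mem_openCalls_succ, ih, hν.matching_posType_succ (fun _ => ih), posType_eq_call_iff]
    constructor
    · rintro (⟨rfl, y, h⟩ | ⟨⟨hx, y, hy, h⟩, not_closed⟩)
      · exact ⟨le_rfl, y, (hν.1 _ _ h).2.1, h⟩
      · exact ⟨by omega, y, lt_of_le_of_ne hy fun eq => not_closed (eq ▸ h), h⟩
    · rintro ⟨hx, y, hy, h⟩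
      obtain rfl | lt := hx.eq_or_lt
      · exact Or.inl ⟨rfl, y, h⟩
      · refine Or.inr ⟨⟨by omega, y, by omega, h⟩, fun closed => ?_⟩
        exact hy.ne (hν.2.1 x _ _ closed h)

theorem IsNestingRel.matching_posType (hν : IsNestingRel n ν) : matching (posType ν) = ν := by
  ext x y
  cases y with
  | zero =>
    exact ⟨fun h => absurd h.lt.2.1 x.not_lt_zero, fun h => absurd (hν.1 _ _ h).2.1 x.not_lt_zero⟩
  | succ k => exact hν.matching_posType_succ fun _ => hν.mem_openCalls_posType

theorem IsNestingRel.isBalanced_posType (hν : IsNestingRel n ν) : IsBalanced (posType ν) n := by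
  refine ⟨fun k _ hk => ?_, List.eq_nil_iff_forall_not_mem.mpr fun x hx => ?_⟩
  · obtain ⟨x, hx⟩ := hν.posType_eq_ret_iff.mp hk
    have bounds := hν.1 _ _ hx
    exact List.ne_nil_of_mem (hν.mem_openCalls_posType.mpr ⟨by omega, k + 1, by omega, hx⟩)
  · obtain ⟨-, y, hy, h⟩ := hν.mem_openCalls_posType.mp hx
    exact hy.not_ge (hν.1 _ _ h).2.2

theorem IsNestingRel.posType_eq_internal (hν : IsNestingRel n ν) (hy : y = 0 ∨ n < y) :
    posType ν y = internal := by
  cases h : posType ν y with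
  | call =>
    obtain ⟨z, hz⟩ := posType_eq_call_iff.mp h
    have := hν.1 _ _ hz
    omega
  | internal => rfl
  | ret =>
    obtain ⟨z, hz⟩ := hν.posType_eq_ret_iff.mp h
    have := hν.1 _ _ hz
    omega

theorem IsBalanced.posType_matching (hb : IsBalanced t n)
    (ht : ∀ j, j = 0 ∨ n < j → t j = internal) : posType (matching t) = t := by
  have hν : IsNestingRel n (matching t) := isNestingRel_matching fun j hj => ht j (Or.inr hj)
  have not_call {j : ℕ} (h : t j ≠ call) : ¬ ∃ z, matching t j z := fun ⟨_, hz⟩ => h hz.lt.2.2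
  funext j
  by_cases range : j = 0 ∨ n < j
  · rw [hν.posType_eq_internal range, ht j range]
  obtain ⟨k, rfl⟩ : ∃ k, j = k + 1 := Nat.exists_eq_add_one.mpr (by omega)
  cases h : t (k + 1) with
  | call =>
    refine posType_eq_call_iff.mpr
      (exists_matching (mem_openCalls_succ.mpr (Or.inl ⟨rfl, h⟩)) (m := n) (by omega) ?_)
    rw [hb.2]
    exact List.not_mem_nil
  | ret =>
    obtain ⟨x, hx⟩ := Option.isSome_iff_exists.mp
      (List.isSome_head?.mpr (hb.1 k (by omega) h))
    exact hν.posType_eq_ret_iff.mpr ⟨x, h, hx⟩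
  | internal =>
    rw [posType, if_neg (not_call (by simp [h])), if_neg fun ⟨_, hx⟩ => by simpa [h] using hx.1]

end PosType

section OfTypes

variable {Δ : Type}

/-- The sequence `t` as a function of the position, counted from `1`. -/
def typeAt {n : ℕ} (t : Fin n → PositionType) : ℕ → PositionType
  | 0 => internal
  | j + 1 => if h : j < n then t ⟨j, h⟩ else internal

theorem typeAt_succ {n : ℕ} (t : Fin n → PositionType) (i : Fin n) : typeAt t (i + 1) = t i :=
  dif_pos i.isLt

theorem typeAt_eq_internal {n : ℕ} (t : Fin n → PositionType) {j : ℕ} (hj : j = 0 ∨ n < j) :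
    typeAt t j = internal := by
  cases j with
  | zero => rfl
  | succ j => exact dif_neg (by omega)

theorem typeAt_comp_succ {n : ℕ} {f : ℕ → PositionType}
    (hf : ∀ j, j = 0 ∨ n < j → f j = internal) :
    typeAt (fun i : Fin n => f (i + 1)) = f := by
  funext j
  by_cases hj : j = 0 ∨ n < j
  · rw [typeAt_eq_internal _ hj, hf j hj]
  · obtain ⟨k, rfl⟩ : ∃ k, j = k + 1 := Nat.exists_eq_add_one.mpr (by omega)
    exact dif_pos (by omega)

namespace NestedWord

theorem eq_of_word_eq_of_rel_eq {nw nw' : NestedWord Δ} (hw : nw.word = nw'.word)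
    (hrel : nw.rel = nw'.rel) : nw = nw' := by
  cases nw
  cases nw'
  congr

/-- The nested word over `w` in which every return matches the latest open call. -/
def ofTypes {w : List Δ} (hw : w ≠ []) (t : Fin w.length → PositionType) : NestedWord Δ where
  word := w
  ne := hw
  rel := matching (typeAt t)
  isNest := isNestingRel_matching fun _ hj => typeAt_eq_internal t (Or.inr hj)

theorem posType_ofTypes {w : List Δ} (hw : w ≠ []) {t : Fin w.length → PositionType}
    (ht : IsBalanced (typeAt t) w.length) : posType (ofTypes hw t).rel = typeAt t :=
  ht.posType_matching fun _ => typeAt_eq_internal t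

theorem bijOn_ofTypes {w : List Δ} (hw : w ≠ []) :
    Set.BijOn (ofTypes hw) {t | IsBalanced (typeAt t) w.length} {nw | nw.word = w} := by
  refine ⟨fun _ _ => rfl, fun t ht t' ht' h => ?_, ?_⟩
  · have typeAt_eq : typeAt t = typeAt t' := by
      rw [← posType_ofTypes hw ht, ← posType_ofTypes hw ht', h]
    funext i
    rw [← typeAt_succ t, typeAt_eq, typeAt_succ]
  · rintro nw rfl
    have types_eq : typeAt (fun i : Fin nw.word.length => posType nw.rel (i + 1)) =
        posType nw.rel := typeAt_comp_succ fun _ => nw.isNest.posType_eq_internal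
    refine ⟨fun i => posType nw.rel (i + 1), ?_, eq_of_word_eq_of_rel_eq rfl ?_⟩
    · exact (congrArg (IsBalanced · _) types_eq).mpr nw.isNest.isBalanced_posType
    · exact (congrArg matching types_eq).trans nw.isNest.matching_posType

end NestedWord

open Classical in
theorem projNW_eq_sum {K : Type} [CommSemiring K] (S : NestedWord Δ → K) {w : List Δ}
    (hw : w ≠ []) :
    projNW S w =
      ∑ t with IsBalanced (typeAt t) w.length, S (NestedWord.ofTypes hw t) := by
  calc projNW S w = ∑ᶠ nw ∈ {nw : NestedWord Δ | nw.word = w}, S nw := rfl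
    _ = ∑ᶠ t ∈ {t | IsBalanced (typeAt t) w.length}, S (NestedWord.ofTypes hw t) :=
      (finsum_mem_eq_of_bijOn _ (NestedWord.bijOn_ofTypes hw) fun _ _ => rfl).symm
    _ = _ := by rw [← finsum_mem_coe_finset, Finset.coe_filter_univ]

theorem projNW_nil {K : Type} [CommSemiring K] (S : NestedWord Δ → K) : projNW S [] = 0 :=
  finsum_mem_eq_zero_of_forall_eq_zero fun nw (hw : nw.word = []) => absurd hw nw.ne

end OfTypes

section FinSnoc

theorem sum_eq_sum_snoc {M α : Type*} [AddCommMonoid M] [Fintype α] {n : ℕ}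
    (f : (Fin (n + 1) → α) → M) :
    ∑ r, f r = ∑ r : Fin n → α, ∑ x, f (Fin.snoc (α := fun _ => α) r x) := by
  rw [Finset.sum_comm, ← Fintype.sum_prod_type']
  exact (Fintype.sum_equiv (Fin.snocEquiv fun _ => α) _ f fun _ => rfl).symm

theorem typeAt_snoc {n : ℕ} (t : Fin n → PositionType) (x : PositionType) :
    typeAt (Fin.snoc (α := fun _ => PositionType) t x) =
      Function.update (typeAt t) (n + 1) x := by
  funext j
  obtain _ | j := j
  · rfl
  obtain lt | rfl | gt := lt_trichotomy j n
  · simp [typeAt, Function.update, Fin.snoc, lt, lt.ne, Nat.lt_succ_of_lt lt]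
  · simp [typeAt, Fin.snoc]
  · simp [typeAt, gt.ne', show ¬ j < n + 1 by omega, gt.not_gt]

theorem clampFun_snoc {Q : Type} {n : ℕ} (r : Fin (n + 1) → Q) (q : Q) {j : ℕ}
    (hj : j ≤ n + 1) :
    clampFun (Fin.snoc (α := fun _ => Q) r q) j = Function.update (clampFun r) (n + 1) q j := by
  obtain rfl | lt := hj.eq_or_lt
  · simp [clampFun, Fin.snoc]
  · simp [clampFun, Fin.snoc, lt.ne, Nat.min_eq_left hj, Nat.min_eq_left (Nat.le_of_lt_succ lt), lt]

end FinSnoc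

/-! ### Nested word automata as pushdown automata -/

namespace WNWA

variable {K Δ : Type} [CommSemiring K] (A : WNWA K Δ)

/-- The weight of a transition reading a position of the given type, where the list holds the
states in which the open calls were entered. -/
def transWeight : PositionType → List A.Q → A.Q → Δ → A.Q → K
  | call, _, p, a, q => A.δcall p a q
  | internal, _, p, a, q => A.δint p a q
  | ret, s :: _, p, a, q => A.δret p s a q
  | ret, [], _, _, _ => 0

/-- `A` as a weighted pushdown automaton whose store holds states: the total weight of the
computations that read the given word and end with an empty store. -/
def stackWeight : List Δ → List A.Q → A.Q → K
  | [], [], p => A.κ p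
  | [], _ :: _, _ => 0
  | a :: w, σ, p => ∑ x, ∑ q, A.transWeight x σ p a q * stackWeight w (x.updateStack p σ) q

theorem stackWeight_cons (a : Δ) (w : List Δ) (σ : List A.Q) (p : A.Q) :
    A.stackWeight (a :: w) σ p =
      ∑ q, A.δcall p a q * A.stackWeight w (p :: σ) q + ∑ q, A.δint p a q * A.stackWeight w σ q +
        ∑ q, A.transWeight ret σ p a q * A.stackWeight w σ.tail q := by
  rw [stackWeight, PositionType.sum_univ]
  simp only [transWeight, updateStack]

variable {A} {t t' : ℕ → PositionType} {ρ ρ' : ℕ → A.Q} {k : ℕ}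

/-- The pushdown store of a run `ρ` after `k` steps. -/
def stackStates (t : ℕ → PositionType) (ρ : ℕ → A.Q) (k : ℕ) : List A.Q :=
  (openCalls t k).map fun i => ρ (i - 1)

theorem stackStates_succ :
    stackStates t ρ (k + 1) = (t (k + 1)).updateStack (ρ k) (stackStates t ρ k) :=
  map_updateStack _ _ _ _

theorem stackStates_congr (ht : ∀ j ≤ k, t j = t' j) (hρ : ∀ j ≤ k, ρ j = ρ' j) :
    stackStates t ρ k = stackStates t' ρ' k := by
  rw [stackStates, openCalls_congr ht, stackStates]
  refine List.map_congr_left fun i hi => hρ _ ?_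
  have := mem_openCalls hi
  omega

theorem posWeight_eq (A : WNWA K Δ) (nw : NestedWord Δ) (ρ : ℕ → A.Q) (j : ℕ) :
    A.posWeight nw ρ j =
      A.transWeight (posType nw.rel j) (stackStates (posType nw.rel) ρ (j - 1)) (ρ (j - 1))
        (nw.letter j) (ρ j) := by
  rw [posWeight]
  split_ifs with is_call is_return
  · rw [posType_eq_call_iff.mpr is_call, transWeight]
  · have matched : matching (posType nw.rel) is_return.choose j :=
      nw.isNest.matching_posType.symm ▸ is_return.choose_spec
    obtain ⟨σ, openCalls_eq⟩ := List.head?_eq_some_iff.mp matched.2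
    rw [matched.1, stackStates, openCalls_eq, List.map_cons, transWeight]
  · have is_internal : posType nw.rel j = internal :=
      (if_neg is_call).trans (if_neg is_return)
    rw [is_internal, transWeight]

/-- The weight of the first `k` steps of the run `ρ` on the letters `ℓ 1, ℓ 2, …`. -/
def pathWeight (A : WNWA K Δ) (ℓ : ℕ → Δ) (t : ℕ → PositionType) (ρ : ℕ → A.Q) (k : ℕ) : K :=
  ∏ j ∈ Finset.Icc 1 k, A.transWeight (t j) (stackStates t ρ (j - 1)) (ρ (j - 1)) (ℓ j) (ρ j)

theorem pathWeight_succ (ℓ : ℕ → Δ) :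
    A.pathWeight ℓ t ρ (k + 1) = A.pathWeight ℓ t ρ k *
      A.transWeight (t (k + 1)) (stackStates t ρ k) (ρ k) (ℓ (k + 1)) (ρ (k + 1)) :=
  Finset.prod_Icc_succ_top (by omega) _

theorem pathWeight_congr (ℓ : ℕ → Δ) (ht : ∀ j ≤ k, t j = t' j) (hρ : ∀ j ≤ k, ρ j = ρ' j) :
    A.pathWeight ℓ t ρ k = A.pathWeight ℓ t' ρ' k := by
  refine Finset.prod_congr rfl fun j hj => ?_
  have hj := (Finset.mem_Icc.mp hj).2
  rw [ht j hj, hρ j hj, hρ (j - 1) (by omega), stackStates_congr (t' := t') (ρ' := ρ')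
    (fun i hi => ht i (by omega)) fun i hi => hρ i (by omega)]

theorem pathWeight_eq_zero_of_unmatched_return (ℓ : ℕ → Δ) {j : ℕ} (hj : j < k)
    (is_return : t (j + 1) = ret) (no_call : openCalls t j = []) : A.pathWeight ℓ t ρ k = 0 := by
  refine Finset.prod_eq_zero (i := j + 1) (Finset.mem_Icc.mpr ⟨by omega, hj⟩) ?_
  rw [is_return, Nat.add_sub_cancel, stackStates, no_call, List.map_nil, transWeight]

/-- The total weight of the computations on `w` whose first `k` steps follow `t` and `ρ`. -/
def prefixWeight (A : WNWA K Δ) (ℓ : ℕ → Δ) (w : List Δ) (t : ℕ → PositionType) (ρ : ℕ → A.Q)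
    (k : ℕ) : K :=
  A.ι (ρ 0) * A.pathWeight ℓ t ρ k * A.stackWeight (w.drop k) (stackStates t ρ k) (ρ k)

theorem prefixWeight_congr (ℓ : ℕ → Δ) (w : List Δ) (ht : ∀ j ≤ k, t j = t' j)
    (hρ : ∀ j ≤ k, ρ j = ρ' j) : A.prefixWeight ℓ w t ρ k = A.prefixWeight ℓ w t' ρ' k := by
  rw [prefixWeight, pathWeight_congr ℓ ht hρ, stackStates_congr ht hρ, hρ 0 k.zero_le, hρ k le_rfl,
    prefixWeight]

theorem prefixWeight_zero (ℓ : ℕ → Δ) (w : List Δ) :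
    A.prefixWeight ℓ w t ρ 0 = A.ι (ρ 0) * A.stackWeight w [] (ρ 0) := by
  simp [prefixWeight, pathWeight, stackStates, openCalls]

theorem prefixWeight_eq_sum {ℓ : ℕ → Δ} {w : List Δ}
    (hk : w.drop k = ℓ (k + 1) :: w.drop (k + 1)) :
    A.prefixWeight ℓ w t ρ k = ∑ x, ∑ q,
      A.prefixWeight ℓ w (Function.update t (k + 1) x) (Function.update ρ (k + 1) q) (k + 1) := by
  rw [prefixWeight, hk, stackWeight]
  simp only [Finset.mul_sum]
  refine Finset.sum_congr rfl fun x _ => Finset.sum_congr rfl fun q _ => ?_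
  have ht (j : ℕ) (hj : j ≤ k) : Function.update t (k + 1) x j = t j :=
    Function.update_of_ne (by omega) _ _
  have hρ (j : ℕ) (hj : j ≤ k) : Function.update ρ (k + 1) q j = ρ j :=
    Function.update_of_ne (by omega) _ _
  rw [prefixWeight, pathWeight_succ, stackStates_succ, pathWeight_congr ℓ ht hρ,
    stackStates_congr ht hρ, hρ 0 k.zero_le, hρ k le_rfl, Function.update_self,
    Function.update_self]
  ring

theorem sum_prefixWeight {ℓ : ℕ → Δ} {w : List Δ}
    (hℓ : ∀ k < w.length, w.drop k = ℓ (k + 1) :: w.drop (k + 1)) (hk : k ≤ w.length) :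
    ∑ t : Fin k → PositionType, ∑ r : Fin (k + 1) → A.Q,
      A.prefixWeight ℓ w (typeAt t) (clampFun r) k = ∑ p, A.ι p * A.stackWeight w [] p := by
  induction k with
  | zero =>
    simp only [prefixWeight_zero, sum_eq_sum_snoc, Finset.univ_unique, Finset.sum_singleton]
    rfl
  | succ k ih =>
    rw [← ih (Nat.le_of_succ_le hk), sum_eq_sum_snoc]
    refine Finset.sum_congr rfl fun t _ => ?_
    simp only [sum_eq_sum_snoc (n := k + 1), typeAt_snoc]
    rw [Finset.sum_comm]
    refine Finset.sum_congr rfl fun r _ => ?_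
    rw [prefixWeight_eq_sum (hℓ k hk)]
    refine Finset.sum_congr rfl fun x _ => Finset.sum_congr rfl fun q _ => ?_
    exact prefixWeight_congr ℓ w (fun _ _ => rfl) fun j hj => clampFun_snoc r q hj

theorem prefixWeight_length_eq_zero {ℓ : ℕ → Δ} {w : List Δ} (h : ¬ IsBalanced t w.length) :
    A.prefixWeight ℓ w t ρ w.length = 0 := by
  rw [IsBalanced, not_and_or] at h
  rw [prefixWeight, List.drop_length]
  obtain unmatched_return | unmatched_call := h
  · push Not at unmatched_return
    obtain ⟨k, hk, is_return, no_call⟩ := unmatched_return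
    rw [pathWeight_eq_zero_of_unmatched_return ℓ hk is_return no_call, mul_zero, zero_mul]
  · obtain ⟨i, σ, hσ⟩ := List.exists_cons_of_ne_nil unmatched_call
    rw [stackStates, hσ, List.map_cons, stackWeight, mul_zero]

theorem runWeight_ofTypes {w : List Δ} (hw : w ≠ []) {t : Fin w.length → PositionType}
    (ht : IsBalanced (typeAt t) w.length) (ρ : ℕ → A.Q) :
    A.runWeight (NestedWord.ofTypes hw t) ρ =
      A.pathWeight (fun j => w.getD (j - 1) (w.head hw)) (typeAt t) ρ w.length :=
  Finset.prod_congr rfl fun j _ => by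
    rw [posWeight_eq, NestedWord.posType_ofTypes hw ht]
    rfl

theorem behavior_ofTypes {w : List Δ} (hw : w ≠ []) {t : Fin w.length → PositionType}
    (ht : IsBalanced (typeAt t) w.length) :
    A.behavior (NestedWord.ofTypes hw t) = ∑ r : Fin (w.length + 1) → A.Q,
      A.prefixWeight (fun j => w.getD (j - 1) (w.head hw)) w (typeAt t) (clampFun r) w.length := by
  refine Finset.sum_congr rfl fun (r : Fin (w.length + 1) → A.Q) _ => ?_
  have last_eq : r (Fin.last w.length) = clampFun r w.length :=
    congrArg r (Fin.ext (min_self _).symm)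
  rw [prefixWeight, List.drop_length, stackStates, ht.2, List.map_nil, stackWeight, ← last_eq,
    ← runWeight_ofTypes hw ht]
  rfl

theorem projNW_behavior (A : WNWA K Δ) {w : List Δ} (hw : w ≠ []) :
    projNW A.behavior w = ∑ p, A.ι p * A.stackWeight w [] p := by
  have drop_eq (k : ℕ) (hk : k < w.length) :
      w.drop k = w.getD (k + 1 - 1) (w.head hw) :: w.drop (k + 1) := by
    rw [Nat.add_sub_cancel, List.getD_eq_getElem _ _ hk, List.drop_eq_getElem_cons]
  rw [projNW_eq_sum A.behavior hw,
    ← sum_prefixWeight (ℓ := fun j => w.getD (j - 1) (w.head hw)) drop_eq le_rfl,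
    Finset.sum_filter]
  refine Finset.sum_congr rfl fun t _ => ?_
  split_ifs with ht
  · exact behavior_ofTypes hw ht
  · exact (Finset.sum_eq_zero fun r _ => prefixWeight_length_eq_zero ht).symm

end WNWA

/-! ### The automaton of a system in Greibach normal form -/

namespace FormalSeries

section LeftDeriv

variable {K Δ : Type*} [CommSemiring K]

theorem exists_finset_mem_wordSpan {Y A : Type*} [Semiring A] [Algebra K A] {V : Y → A}
    {L : Set (List Y)} {f : A} (hf : f ∈ wordSpan K V L) :
    ∃ U : Finset (List Y), (U : Set (List Y)) ⊆ L ∧ f ∈ wordSpan K V (U : Set (List Y)) := by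
  classical
  obtain ⟨T, hT, hfT⟩ := Submodule.mem_span_finite_of_mem_span hf
  obtain ⟨U, hU, rfl⟩ := Finset.subset_set_image_iff.mp hT
  exact ⟨U, hU, by rwa [wordSpan, ← Finset.coe_image]⟩

theorem leftDeriv_mem_wordSpan {X : Type*} {S : X → FormalSeries K Δ}
    {L L' : Set (List (Δ ⊕ X))} (hL : L ⊆ terminalHeaded Δ X) (hL' : ∀ u ∈ L, u.tail ∈ L')
    {f : FormalSeries K Δ} (hf : f ∈ wordSpan K (symbolValue S) L) (a : Δ) :
    leftDeriv a f ∈ wordSpan K (symbolValue S) L' := by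
  suffices h : wordSpan K (symbolValue S) L ≤
      (wordSpan K (symbolValue S) L').comap (leftDeriv a) from h hf
  refine wordSpan_le.mpr fun u hu => ?_
  obtain ⟨b, v, rfl⟩ := hL hu
  rw [Submodule.mem_comap, wordValue_cons, symbolValue, Sum.elim_inl,
    leftDeriv_mul_of_nil_eq_zero a (letter_nil b), leftDeriv_letter, ite_mul, one_mul, zero_mul]
  split_ifs
  · exact wordValue_mem_wordSpan (hL' _ hu)
  · exact zero_mem _

theorem exists_finset_tail_closed {Y : Type*} (U : Finset (List Y)) :
    ∃ W : Finset (List Y), U ⊆ W ∧ [] ∈ W ∧ ∀ u ∈ W, u.tail ∈ W := by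
  classical
  refine ⟨insert [] (U.biUnion fun u => u.tails.toFinset), fun u hu => ?_,
    Finset.mem_insert_self _ _, fun u hu => ?_⟩
  · exact Finset.mem_insert_of_mem (Finset.mem_biUnion.mpr ⟨u, hu, by simp⟩)
  · simp only [Finset.mem_insert, Finset.mem_biUnion, List.mem_toFinset, List.mem_tails] at hu ⊢
    obtain rfl | ⟨v, hv, suffix⟩ := hu
    · exact Or.inl rfl
    · exact Or.inr ⟨v, hv, (List.tail_suffix u).trans suffix⟩

theorem exists_finset_leftDeriv_mem {X : Type*} [Finite X] {S : X → FormalSeries K Δ}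
    (hS : ∀ x, S x ∈ wordSpan K (symbolValue S) (terminalHeaded Δ X)) (u₀ : List (Δ ⊕ X)) :
    ∃ W : Finset (List (Δ ⊕ X)), u₀ ∈ W ∧ [] ∈ W ∧ (∀ u ∈ W, u.tail ∈ W) ∧
      ∀ s a, leftDeriv a (symbolValue S s) ∈ wordSpan K (symbolValue S) (W : Set _) := by
  classical
  have := Fintype.ofFinite X
  choose U headed S_mem using fun x => exists_finset_mem_wordSpan (hS x)
  obtain ⟨W, subset, nil_mem, tail_mem⟩ :=
    exists_finset_tail_closed (insert u₀ (Finset.univ.biUnion U))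
  refine ⟨W, subset (Finset.mem_insert_self _ _), nil_mem, tail_mem, fun s a => ?_⟩
  cases s with
  | inl b =>
    rw [symbolValue, Sum.elim_inl, leftDeriv_letter]
    split_ifs
    · exact wordValue_mem_wordSpan (u := []) nil_mem
    · exact zero_mem _
  | inr x =>
    refine leftDeriv_mem_wordSpan (headed x) (fun u hu => tail_mem u (subset ?_)) (S_mem x) a
    exact Finset.mem_insert_of_mem (Finset.mem_biUnion.mpr ⟨x, Finset.mem_univ x, hu⟩)

theorem wordValue_apply_nil {Y : Type*} {V : Y → FormalSeries K Δ} (hV : ∀ y, V y [] = 0)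
    {u : List Y} (hu : u ≠ []) : wordValue V u [] = 0 := by
  obtain ⟨y, v, rfl⟩ := List.exists_cons_of_ne_nil hu
  rw [wordValue_cons, mul_nil, hV, zero_mul]

theorem wordValue_cons_apply_cons {Y : Type*} {V : Y → FormalSeries K Δ} {W : Finset (List Y)}
    {y : Y} {a : Δ} {c : W → K} (hy : V y [] = 0)
    (hc : leftDeriv a (V y) = ∑ u, c u • wordValue V u.1) (v : List Y) (w : List Δ) :
    wordValue V (y :: v) (a :: w) = ∑ u, c u * wordValue V (u.1 ++ v) w := by
  rw [wordValue_cons, mul_cons, hy, zero_mul, zero_add, hc, Finset.sum_mul, sum_apply]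
  simp only [FormalSeries.smul_mul, smul_apply, wordValue_append]

end LeftDeriv

end FormalSeries

section GreibachAutomaton

open FormalSeries

variable {K Δ Y : Type} [CommSemiring K]

open Classical in
/-- The automaton of a system in Greibach normal form, where `c y a u` is the weight of the rule
`y → a u`. It simulates leftmost derivations: the state is the topmost block of the remaining
sentential form, a call pushes the block `y :: v` while `y` is being expanded, and a return resumes
at the tail `v` of the block it pops. -/
noncomputable def greibachAutomaton {W : Finset (List Y)} (nil_mem : [] ∈ W) (u₀ : W)
    (c : Y → Δ → W → K) : WNWA K Δ where
  Q := W
  ι u := if u = u₀ then 1 else 0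
  δcall u a q :=
    match u.1 with
    | y :: _ :: _ => c y a q
    | _ => 0
  δint u a q :=
    match u.1 with
    | [] => 0
    | [y] => c y a q
    | y :: _ :: _ => if q.1 = u.1.tail then c y a ⟨[], nil_mem⟩ else 0
  δret u s a q :=
    match u.1 with
    | [y] => if q.1 = s.1.tail then c y a ⟨[], nil_mem⟩ else 0
    | _ => 0
  κ u := if u.1 = [] then 1 else 0

variable {W : Finset (List Y)} {nil_mem : [] ∈ W} {u₀ : W} {c : Y → Δ → W → K}

/-- The series represented by a configuration with state `u` and store `σ`. The state `[]` is dead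
unless the store is empty, because only the return that finishes a block may pop the store. -/
noncomputable def configValue (V : Y → FormalSeries K Δ) (σ : List W) (u : W) :
    FormalSeries K Δ :=
  if u.1 = [] ∧ σ ≠ [] then 0 else wordValue V (u.1 ++ σ.flatMap fun s => s.1.tail)

variable {V : Y → FormalSeries K Δ}

theorem configValue_of_ne_nil {σ : List W} {u : W} (hu : u.1 ≠ []) :
    configValue V σ u = wordValue V (u.1 ++ σ.flatMap fun s => s.1.tail) :=
  if_neg fun h => hu h.1

theorem configValue_nil (u : W) : configValue V [] u = wordValue V u.1 := by
  simp [configValue]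

open Classical in
theorem sum_ite_val_eq {v : List Y} (hv : v ∈ W) (k : K) (g : W → K) :
    ∑ q : W, (if q.1 = v then k else 0) * g q = k * g ⟨v, hv⟩ := by
  rw [Finset.sum_eq_single ⟨v, hv⟩, if_pos rfl]
  · intro q _ hq
    rw [if_neg fun h => hq (Subtype.ext h), zero_mul]
  · exact fun h => absurd (Finset.mem_univ _) h

/-- The dead summand of the state `[]` is replaced by the one that resumes at the block below. -/
theorem sum_mul_configValue_cons (nil_mem : [] ∈ W) {s : W} (hs : s.1.tail ≠ [])
    (tail_mem : s.1.tail ∈ W) (f : W → K) (σ : List W) (w : List Δ) :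
    ∑ q, f q * configValue V (s :: σ) q w + f ⟨[], nil_mem⟩ * configValue V σ ⟨_, tail_mem⟩ w =
      ∑ q, f q * wordValue V (q.1 ++ (s :: σ).flatMap fun s => s.1.tail) w := by
  classical
  have dead : configValue V (s :: σ) ⟨[], nil_mem⟩ w = 0 := by simp [configValue]
  rw [← Finset.add_sum_erase _ _ (Finset.mem_univ ⟨[], nil_mem⟩), dead, mul_zero, zero_add,
    ← Finset.add_sum_erase _ _ (Finset.mem_univ ⟨[], nil_mem⟩), add_comm,
    configValue_of_ne_nil hs]
  congr 1
  refine Finset.sum_congr rfl fun q hq => ?_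
  rw [configValue_of_ne_nil fun h => Finset.ne_of_mem_erase hq (Subtype.ext h)]

theorem configValue_apply_nil (hV : ∀ y, V y [] = 0) {σ : List W} (hσ : ∀ s ∈ σ, s.1.tail ≠ [])
    (u : W) :
    configValue V σ u [] = (greibachAutomaton nil_mem u₀ c).stackWeight [] σ u := by
  cases σ with
  | nil =>
    change configValue V [] u [] = if u.1 = [] then 1 else 0
    rw [configValue_nil]
    split_ifs with hu
    · rw [hu, wordValue_nil, one_nil]
    · exact wordValue_apply_nil hV hu
  | cons s σ =>
    change configValue V (s :: σ) u [] = 0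
    rw [configValue]
    split_ifs
    · rfl
    · refine wordValue_apply_nil hV ?_
      simp [hσ s List.mem_cons_self]

theorem configValue_apply_cons (hV : ∀ y, V y [] = 0) (tail_mem : ∀ u ∈ W, u.tail ∈ W)
    (hc : ∀ y a, leftDeriv a (V y) = ∑ u, c y a u • wordValue V u.1) {σ : List W}
    (hσ : ∀ s ∈ σ, s.1.tail ≠ []) (u : W) (a : Δ) (w : List Δ) :
    configValue V σ u (a :: w) =
      ∑ q : W, (greibachAutomaton nil_mem u₀ c).δcall u a q * configValue V (u :: σ) q w +
        ∑ q : W, (greibachAutomaton nil_mem u₀ c).δint u a q * configValue V σ q w +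
        ∑ q : W, (greibachAutomaton nil_mem u₀ c).transWeight ret σ u a q *
          configValue V σ.tail q w := by
  have expand (y : Y) (v : List Y) (h : u.1 = y :: v) : configValue V σ u (a :: w) =
      ∑ q, c y a q * wordValue V (q.1 ++ (v ++ σ.flatMap fun s => s.1.tail)) w := by
    rw [configValue_of_ne_nil (by simp [h]), h, List.cons_append,
      wordValue_cons_apply_cons (hV y) (hc y a)]
  obtain ⟨_ | ⟨y, _ | ⟨z, v⟩⟩, hu⟩ := u
  · cases σ <;> simp [configValue, greibachAutomaton, WNWA.transWeight]
  · rw [expand y [] rfl]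
    cases σ with
    | nil =>
      simp [greibachAutomaton, WNWA.transWeight, configValue_nil]
    | cons s σ =>
      rw [List.nil_append, ← sum_mul_configValue_cons nil_mem (hσ s List.mem_cons_self)
        (tail_mem _ s.2), ← sum_ite_val_eq (tail_mem _ s.2) _ fun q => configValue V σ q w]
      simp [greibachAutomaton, WNWA.transWeight]
  · refine (expand y (z :: v) rfl).trans ((sum_mul_configValue_cons nil_mem
      (s := ⟨y :: z :: v, hu⟩) (List.cons_ne_nil z v) (tail_mem _ hu) (c y a) σ w).symm.trans ?_)
    rw [← sum_ite_val_eq (tail_mem _ hu) _ fun q => configValue V σ q w]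
    cases σ <;> simp [greibachAutomaton, WNWA.transWeight]

theorem stackWeight_greibachAutomaton (hV : ∀ y, V y [] = 0) (tail_mem : ∀ u ∈ W, u.tail ∈ W)
    (hc : ∀ y a, leftDeriv a (V y) = ∑ u, c y a u • wordValue V u.1) {σ : List W}
    (hσ : ∀ s ∈ σ, s.1.tail ≠ []) (u : W) (w : List Δ) :
    (greibachAutomaton nil_mem u₀ c).stackWeight w σ u = configValue V σ u w := by
  induction w generalizing σ u with
  | nil => exact (configValue_apply_nil hV hσ u).symm
  | cons a w ih =>
    rw [configValue_apply_cons (nil_mem := nil_mem) (u₀ := u₀) hV tail_mem hc hσ]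
    refine ((greibachAutomaton nil_mem u₀ c).stackWeight_cons a w σ u).trans
      (congrArg₂ _ (congrArg₂ _ ?_ ?_) ?_)
    · refine Finset.sum_congr (M := K) rfl fun q _ => ?_
      by_cases hu : u.1.tail = []
      · have no_call : (greibachAutomaton nil_mem u₀ c).δcall u a q = 0 := by
          obtain ⟨_ | ⟨y, _ | ⟨z, v⟩⟩, hu⟩ := u <;> simp_all [greibachAutomaton]
        rw [no_call, zero_mul, zero_mul]
      · exact congrArg _ (ih (List.forall_mem_cons.mpr ⟨hu, hσ⟩) q)
    · exact Finset.sum_congr (M := K) rfl fun q _ => congrArg _ (ih hσ q)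
    · refine Finset.sum_congr (M := K) rfl fun q _ => congrArg _ (ih (fun s hs => ?_) q)
      exact hσ s (List.mem_of_mem_tail hs)

theorem projNW_behavior_greibachAutomaton (hV : ∀ y, V y [] = 0)
    (tail_mem : ∀ u ∈ W, u.tail ∈ W)
    (hc : ∀ y a, leftDeriv a (V y) = ∑ u, c y a u • wordValue V u.1) {w : List Δ} (hw : w ≠ []) :
    projNW (greibachAutomaton nil_mem u₀ c).behavior w = wordValue V u₀.1 w := by
  rw [← configValue_nil, ← stackWeight_greibachAutomaton (nil_mem := nil_mem) (u₀ := u₀) hV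
    tail_mem hc (List.forall_mem_nil _), WNWA.projNW_behavior _ hw]
  refine (Fintype.sum_eq_single (M := K) (α := W) u₀ fun u hu => ?_).trans ?_
  · exact mul_eq_zero_of_left (if_neg hu) _
  · exact (congrArg (· * _) (if_pos rfl)).trans (one_mul _)

theorem exists_nwRegular_projNW_eq {u₀ : List Y} (hV : ∀ y, V y [] = 0) (hu₀ : u₀ ∈ W)
    (nil_mem : [] ∈ W) (tail_mem : ∀ u ∈ W, u.tail ∈ W)
    (hW : ∀ y a, leftDeriv a (V y) ∈ wordSpan K V (W : Set (List Y))) :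
    ∃ S : NestedWord Δ → K, NWRegular S ∧ ∀ w, w ≠ [] → projNW S w = wordValue V u₀ w := by
  choose c hc using fun y a => (Submodule.mem_span_image_finset_iff_exists_fun K).mp (hW y a)
  refine ⟨_, ⟨greibachAutomaton nil_mem ⟨u₀, hu₀⟩ c, fun _ => rfl⟩, fun w hw => ?_⟩
  exact projNW_behavior_greibachAutomaton hV tail_mem (fun y a => (hc y a).symm) hw

end GreibachAutomaton

/-- **Proposition (Mathissen).** Every algebraic formal power series is the
projection of a regular nested word series. -/
theorem algebraic_is_proj_of_regular
    (K Δ : Type) [CommSemiring K] (h01 : (0 : K) ≠ 1)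
    (R : List Δ → K) (hR : IsAlgebraicSeries K Δ R) :
    ∃ S : NestedWord Δ → K, NWRegular S ∧ ∀ w, projNW S w = R w := by
  obtain ⟨X, _, P, Sol, finite_support, proper, solution, Sol_nil, x₀, R_eq⟩ := hR
  obtain ⟨S', S'_inl, greibach⟩ := FormalSeries.exists_greibach Sol_nil
    (FormalSeries.mem_wordSpan_of_isSolution finite_support proper solution)
  obtain ⟨W, start_mem, nil_mem, tail_mem, leftDeriv_mem⟩ :=
    FormalSeries.exists_finset_leftDeriv_mem greibach [Sum.inr (Sum.inl x₀)]
  have S'_nil (z : X ⊕ X × X) : S' z [] = 0 :=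
    FormalSeries.nil_eq_zero_of_mem_wordSpan
      (by rintro _ ⟨a, v, rfl⟩; exact ⟨_, v, rfl, FormalSeries.letter_nil a⟩) (greibach z)
  obtain ⟨S, regular, projNW_eq⟩ := exists_nwRegular_projNW_eq
    (FormalSeries.symbolValue_nil S'_nil) start_mem nil_mem tail_mem leftDeriv_mem
  refine ⟨S, regular, fun w => ?_⟩
  obtain rfl | hw := eq_or_ne w []
  · rw [projNW_nil, R_eq, Sol_nil]
  · rw [projNW_eq w hw, wordValue_cons, wordValue_nil, mul_one, R_eq, ← S'_inl]
    rfl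
end
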